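/- arXiv:math/0401313 — 2 statements merged into one kernel-verified Lean document; each statement's English description precedes it below -/
import Mathlib

section
/- There is an absolute constant C such that for every positive integer k, there exist a 3-side grid G of size at most C·k and a function h₀ : F → ℤ, where F is the set of edges of two of the three sides of G, such that the polyhedron C(G,h₀) has a vertex (extreme point) h satisfying: (a) h(e) is a rational number with denominator exactly k for some edge e ∈ E(G), and (b) h takes integer values on all boundary edges of G. -/
open scoped BigOperators

attribute [local instance] Classical.propDecidable

noncomputable section

/-- Points of the plane. -/
abbrev Pt : Type := ℝ × ℝ

/-- Directed edges: ordered pairs of points. -/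
abbrev Ed : Type := Pt × Pt

/-- The three generating vectors ξ₁ = (1,0), ξ₂ = (−1/2, √3/2), ξ₃ = (−1/2, −√3/2). -/
noncomputable def xiv : Fin 3 → Pt
  | 0 => ((1 : ℝ), (0 : ℝ))
  | 1 => (-(1 / 2 : ℝ), Real.sqrt 3 / 2)
  | 2 => (-(1 / 2 : ℝ), -(Real.sqrt 3 / 2))

/-- A little (lattice) triangle of the triangular grid, given by its base point and
its orientation (`up = true` for an upward triangle). -/
structure GridTriangle : Type where
  base : Pt
  up : Bool

noncomputable def GridTriangle.v0 (T : GridTriangle) : Pt := T.base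
noncomputable def GridTriangle.v1 (T : GridTriangle) : Pt := T.base + xiv 0
noncomputable def GridTriangle.v2 (T : GridTriangle) : Pt :=
  if T.up then T.base + xiv 0 + xiv 1 else T.base + xiv 0 + xiv 2

/-- The three directed edges of the 3-circuit surrounding a little triangle;
each has direction ξ₁, ξ₂ or ξ₃. -/
noncomputable def GridTriangle.e0 (T : GridTriangle) : Ed := (T.v0, T.v1)
noncomputable def GridTriangle.e1 (T : GridTriangle) : Ed := (T.v1, T.v2)
noncomputable def GridTriangle.e2 (T : GridTriangle) : Ed := (T.v2, T.v0)

noncomputable def GridTriangle.edgeFinset (T : GridTriangle) : Finset Ed := {T.e0, T.e1, T.e2}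

/-- The closed region spanned by a little triangle. -/
noncomputable def GridTriangle.region (T : GridTriangle) : Set Pt :=
  convexHull ℝ {T.v0, T.v1, T.v2}

/-- Vectors of the lattice generated by ξ₁ and ξ₂. -/
def IsLatticeVec (p : Pt) : Prop := ∃ m n : ℤ, p = (m : ℝ) • xiv 0 + (n : ℝ) • xiv 1

/-- A convex triangular grid: a finite nonempty set of little triangles of a common
translate of the triangular lattice whose union is a convex polygon.  (Its vertices,
edges, bounded faces and boundary are then those of the planar digraph formed by the
edges of the little triangles.) -/
structure ConvexGrid : Type where
  tris : Finset GridTriangle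
  nonempty : tris.Nonempty
  aligned : ∀ T ∈ tris, ∀ T' ∈ tris, IsLatticeVec (T.base - T'.base)
  convex : Convex ℝ (⋃ T ∈ tris, GridTriangle.region T)

/-- The region R(G) spanned by the grid. -/
noncomputable def ConvexGrid.region (G : ConvexGrid) : Set Pt :=
  ⋃ T ∈ G.tris, GridTriangle.region T

/-- The (directed) edge set E(G) of the grid. -/
noncomputable def ConvexGrid.edges (G : ConvexGrid) : Finset Ed :=
  G.tris.biUnion GridTriangle.edgeFinset

/-- The boundary edges B(G): edges lying in exactly one little triangle. -/
noncomputable def ConvexGrid.boundary (G : ConvexGrid) : Finset Ed :=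
  G.edges.filter fun e => (G.tris.filter fun T => e ∈ T.edgeFinset).card = 1

/-- A cocirculation: `h(e)+h(e')+h(e'')=0` around each little triangle. -/
def IsCocirculation (G : ConvexGrid) (h : Ed → ℝ) : Prop :=
  ∀ T ∈ G.tris, h T.e0 + h T.e1 + h T.e2 = 0

/-- `g` coincides with an affine function on `S`. -/
def AffineOn (g : Pt → ℝ) (S : Set Pt) : Prop :=
  ∃ φ : Pt →ᵃ[ℝ] ℝ, ∀ x ∈ S, g x = φ x

/-- A concave cocirculation: a cocirculation induced by a concave function on R(G)
which is affinely linear within each little triangle. -/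
def IsConcaveCocirculation (G : ConvexGrid) (h : Ed → ℝ) : Prop :=
  IsCocirculation G h ∧
  ∃ g : Pt → ℝ, ConcaveOn ℝ G.region g ∧ (∀ T ∈ G.tris, AffineOn g T.region) ∧
    ∀ e ∈ G.edges, h e = g e.2 - g e.1

/-- The polyhedron C(G,h₀) of concave cocirculations agreeing with h₀ on F. -/
def CC (G : ConvexGrid) (F : Set Ed) (h₀ : Ed → ℝ) : Set (Ed → ℝ) :=
  {h | IsConcaveCocirculation G h ∧ ∀ e ∈ F, h e = h₀ e}

/-- `h` is a vertex (extreme point) of the set `C` of cocirculations, regarded as a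
subset of ℝ^{E(G)} (only the coordinates on the edges of `G` matter). -/
def IsVertexOf (G : ConvexGrid) (C : Set (Ed → ℝ)) (h : Ed → ℝ) : Prop :=
  h ∈ C ∧ ∀ h₁ ∈ C, ∀ h₂ ∈ C,
    (∀ e ∈ G.edges, h e = (h₁ e + h₂ e) / 2) → ∀ e ∈ G.edges, h₁ e = h₂ e

/-- The edges of the side of the region lying on the segment [a,b]. -/
noncomputable def SideEdges (G : ConvexGrid) (a b : Pt) : Finset Ed :=
  G.boundary.filter fun e => e.1 ∈ segment ℝ a b ∧ e.2 ∈ segment ℝ a b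

/-!
Up to constants, concave cocirculations of a 3-side grid are hives: functions on the lattice points
of a triangle whose affine interpolation is concave. Hives are concave conjugates of tropical
polynomials. A tropical polynomial bends along the edges of a honeycomb in the dual lattice, and its
subgradients at a point of that lattice form a tile of the triangle.

For a suitable honeycomb consisting of `9 * k` tropical lines, where some of the triple points have
been opened to hexagons, divide the conjugate by `k` and pass to an extreme point of the smallest
face of the hive polytope containing the result. The hives in this face are affine on every tile. So
their slopes vary along the honeycomb like the coordinates of a deformed honeycomb: they are constant
along every segment and sum to zero at every vertex. Fixing the values on two sides fixes all
unbounded rays, so the boundary differences remain the integers they were for the undeformed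
honeycomb. A zigzag of `k` equal steps between the hexagons then determines one inner slope to be
exactly `1 / k`.
-/

/-! ### Discretely convex functions -/

/-- The primitive vectors along which the unbounded rays of a honeycomb run. Together with their
negatives they are the six edge directions of the dual triangular lattice `ℤ × ℤ`. -/
def ray : Fin 3 → ℤ × ℤ := ![(-1, 0), (0, -1), (1, 1)]

/-- The quarter turns of the rays: `conormal i` is the edge vector of the primal lattice dual to an
edge in direction `ray i`. -/
def conormal : Fin 3 → ℤ × ℤ := ![(0, -1), (1, 0), (-1, 1)]

/-- The pairing between the dual lattice (points of honeycombs) and the primal lattice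
(gradients). -/
def pair (p v : ℤ × ℤ) : ℤ := p.1 * v.1 + p.2 * v.2

theorem pair_add_left (p q v : ℤ × ℤ) : pair (p + q) v = pair p v + pair q v := by
  simp only [pair, Prod.fst_add, Prod.snd_add]; ring

theorem pair_sub_left (p q v : ℤ × ℤ) : pair (p - q) v = pair p v - pair q v := by
  simp only [pair, Prod.fst_sub, Prod.snd_sub]; ring

theorem pair_add_right (p v w : ℤ × ℤ) : pair p (v + w) = pair p v + pair p w := by
  simp only [pair, Prod.fst_add, Prod.snd_add]; ring

theorem pair_ray_conormal (i : Fin 3) : pair (ray i) (conormal i) = 0 := by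
  fin_cases i <;> rfl

/-- The bending of `f` across the dual edge from `p` to `p + ray i`: the sum of the values at the
two opposite vertices of the rhombus around the edge minus the sum of the values at its ends. -/
def bend (f : ℤ × ℤ → ℤ) (i : Fin 3) (p : ℤ × ℤ) : ℤ :=
  f (p - ray (i + 1)) + f (p - ray (i + 2)) - f p - f (p + ray i)

section bend

variable (f g : ℤ × ℤ → ℤ) (i : Fin 3) (p c : ℤ × ℤ) (x y : ℤ)

theorem bend_add : bend (fun q => f q + g q) i p = bend f i p + bend g i p := by
  unfold bend; ring

theorem bend_sub_const (a : ℤ) : bend (fun q => f q - a) i p = bend f i p := by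
  unfold bend; ring

theorem bend_sum {ι : Type*} (s : Finset ι) (F : ι → ℤ × ℤ → ℤ) :
    bend (fun q => ∑ j ∈ s, F j q) i p = ∑ j ∈ s, bend (F j) i p := by
  simp only [bend, Finset.sum_sub_distrib, Finset.sum_add_distrib]

theorem bend_translate : bend (fun q => f (q - c)) i p = bend f i (p - c) := by
  simp only [bend, sub_right_comm _ _ c, sub_add_eq_add_sub]

theorem bend_zero :
    bend f 0 (x, y) = f (x, y + 1) + f (x - 1, y - 1) - f (x, y) - f (x - 1, y) := by
  simp [bend, ray, sub_eq_add_neg]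

theorem bend_one :
    bend f 1 (x, y) = f (x - 1, y - 1) + f (x + 1, y) - f (x, y) - f (x, y - 1) := by
  simp [bend, ray, sub_eq_add_neg]

theorem bend_two :
    bend f 2 (x, y) = f (x + 1, y) + f (x, y + 1) - f (x, y) - f (x + 1, y + 1) := by
  simp [bend, ray]

end bend

/-- Convexity with respect to the triangulation of the dual lattice. -/
def DiscretelyConvex (f : ℤ × ℤ → ℤ) : Prop := ∀ i p, 0 ≤ bend f i p

namespace DiscretelyConvex

variable {f : ℤ × ℤ → ℤ}

theorem tilt (hf : DiscretelyConvex f) (p v : ℤ × ℤ) :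
    DiscretelyConvex fun q => f (p + q) - pair (p + q) v := by
  intro i q
  have h := hf i (p + q)
  fin_cases i <;> simp [bend, ray, pair, add_sub_assoc, add_assoc] at h ⊢ <;> linarith

/-- `(x, y) ↦ (x - y, x)` has order six and permutes the edge directions cyclically. -/
theorem rotate (hf : DiscretelyConvex f) : DiscretelyConvex fun p => f (p.1 - p.2, p.1) := by
  rintro i ⟨x, y⟩
  have h₀ := hf 0 (x - y + 1, x)
  have h₁ := hf 1 (x - y, x + 1)
  have h₂ := hf 2 (x - y - 1, x - 1)
  fin_cases i <;>
    simp only [Fin.zero_eta, Fin.mk_one, Fin.reduceFinMk, bend_zero, bend_one, bend_two] at * <;>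
    ring_nf at * <;> linarith

theorem le_axis (hf : DiscretelyConvex f) (h : f (0, 0) ≤ f (1, 0)) {x : ℤ} (hx : 0 ≤ x) :
    f (0, 0) ≤ f (x, 0) := by
  have step : ∀ x, 0 ≤ x → f (x, 0) ≤ f (x + 1, 0) := by
    intro x hx
    induction x, hx using Int.leInduction with
    | base => exact h
    | succ x _ ih =>
      have h₁ := hf 1 (x + 1, 0)
      have h₂ := hf 2 (x, -1)
      simp only [bend_one, bend_two] at h₁ h₂
      ring_nf at *
      linarith
  induction x, hx using Int.leInduction with
  | base => exact le_rfl
  | succ x hx ih => exact ih.trans (step x hx)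

theorem le_of_mem_sector (hf : DiscretelyConvex f) (h₁ : f (0, 0) ≤ f (1, 0))
    (h₂ : f (0, 0) ≤ f (1, 1)) {x y : ℤ} (hy : 0 ≤ y) (hxy : y ≤ x) : f (0, 0) ≤ f (x, y) := by
  have step_axis : ∀ x, 0 ≤ x → f (x, 0) ≤ f (x + 1, 1) := by
    intro x hx
    induction x, hx using Int.leInduction with
    | base => exact h₂
    | succ x _ ih =>
      have h := hf 1 (x + 1, 1)
      simp only [bend_one] at h
      ring_nf at *
      linarith
  have step : ∀ y, 0 ≤ y → ∀ x, y ≤ x → f (x, y) ≤ f (x + 1, y + 1) := by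
    intro y hy
    induction y, hy using Int.leInduction with
    | base => simpa using step_axis
    | succ y _ ih =>
      intro x hx
      have h₀ := hf 0 (x + 1, y + 1)
      have h₁ := hf 1 (x, y + 1)
      have := ih (x - 1) (by lia)
      simp only [bend_zero, bend_one] at h₀ h₁
      ring_nf at *
      linarith
  induction y, hy using Int.leInduction generalizing x with
  | base => exact hf.le_axis h₁ hxy
  | succ y hy ih => simpa using (ih (by lia)).trans (step y hy (x - 1) (by lia))

/-- The plane is the union of the six rotated copies of a sector. -/
theorem le_of_le_neighbors (hf : DiscretelyConvex f)
    (h : ∀ i, f 0 ≤ f (ray i) ∧ f 0 ≤ f (-ray i)) (q : ℤ × ℤ) : f 0 ≤ f q := by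
  obtain ⟨x, y⟩ := q
  obtain ⟨h₀, h₀'⟩ : f (0, 0) ≤ f (-1, 0) ∧ f (0, 0) ≤ f (1, 0) := h 0
  obtain ⟨h₁, h₁'⟩ : f (0, 0) ≤ f (0, -1) ∧ f (0, 0) ≤ f (0, 1) := h 1
  obtain ⟨h₂, h₂'⟩ : f (0, 0) ≤ f (1, 1) ∧ f (0, 0) ≤ f (-1, -1) := h 2
  change f (0, 0) ≤ f (x, y)
  have sectors : (0 ≤ y ∧ y ≤ x) ∨ (0 ≤ x ∧ x ≤ y) ∨ (x ≤ 0 ∧ 0 ≤ y) ∨ (x ≤ y ∧ y ≤ 0) ∨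
      (y ≤ x ∧ x ≤ 0) ∨ (0 ≤ x ∧ y ≤ 0) := by lia
  rcases sectors with ⟨hx, hy⟩ | ⟨hx, hy⟩ | ⟨hx, hy⟩ | ⟨hx, hy⟩ | ⟨hx, hy⟩ | ⟨hx, hy⟩
  · exact hf.le_of_mem_sector h₀' h₂ hx hy
  · simpa using hf.rotate.le_of_mem_sector (by simpa using h₂) (by simpa using h₁') (x := y)
      (y := y - x) (by lia) (by lia)
  · simpa using hf.rotate.rotate.le_of_mem_sector (by simpa using h₁') (by simpa using h₀)
      (x := y - x) (y := -x) (by lia) (by lia)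
  · simpa using hf.rotate.rotate.rotate.le_of_mem_sector (by simpa using h₀)
      (by simpa using h₂') (x := -x) (y := -y) (by lia) (by lia)
  · simpa using hf.rotate.rotate.rotate.rotate.le_of_mem_sector (by simpa using h₂')
      (by simpa using h₁) (x := -y) (y := x - y) (by lia) (by lia)
  · simpa using hf.rotate.rotate.rotate.rotate.rotate.le_of_mem_sector (by simpa using h₁)
      (by simpa using h₀') (x := x - y) (y := x) (by lia) (by lia)

end DiscretelyConvex

/-- `v` is a subgradient of `f` at `p`. The subgradients at `p` form the tile dual to `p` in the
primal lattice. -/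
def IsSubgradient (f : ℤ × ℤ → ℤ) (p v : ℤ × ℤ) : Prop := ∀ q, f p - pair p v ≤ f q - pair q v

namespace IsSubgradient

variable {f : ℤ × ℤ → ℤ} {p v : ℤ × ℤ}

theorem pair_sub_le (h : IsSubgradient f p v) (q : ℤ × ℤ) : pair (q - p) v ≤ f q - f p := by
  have := h q
  rw [pair_sub_left]
  linarith

theorem of_le {q : ℤ × ℤ} (h : IsSubgradient f p v) (hq : f q - f p ≤ pair (q - p) v) :
    IsSubgradient f q v := by
  intro r
  have := h r
  rw [pair_sub_left] at hq
  linarith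

theorem bend_pos {i : Fin 3} (h : IsSubgradient f p v)
    (h' : IsSubgradient f (p + ray i) (v + conormal i)) : 0 < bend f i p := by
  have h₁ := h.pair_sub_le (p - ray (i + 1))
  have h₂ := h'.pair_sub_le (p - ray (i + 2))
  fin_cases i <;> simp [ray, conormal, pair, bend] at h₁ h₂ ⊢ <;> linarith

end IsSubgradient

namespace DiscretelyConvex

variable {f : ℤ × ℤ → ℤ}

theorem isSubgradient_iff (hf : DiscretelyConvex f) {p v : ℤ × ℤ} :
    IsSubgradient f p v ↔
      ∀ i, pair (ray i) v ≤ f (p + ray i) - f p ∧ f p - f (p - ray i) ≤ pair (ray i) v := by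
  constructor
  · intro h i
    have h₁ := h (p + ray i)
    have h₂ := h (p - ray i)
    rw [pair_add_left] at h₁
    rw [pair_sub_left] at h₂
    constructor <;> linarith
  · intro h q
    have neighbors (i : Fin 3) : f (p + 0) - pair (p + 0) v ≤ f (p + ray i) - pair (p + ray i) v ∧
        f (p + 0) - pair (p + 0) v ≤ f (p + -ray i) - pair (p + -ray i) v := by
      rw [add_zero, ← sub_eq_add_neg, pair_add_left, pair_sub_left]
      constructor <;> linarith [(h i).1, (h i).2]
    simpa using (hf.tilt p v).le_of_le_neighbors neighbors (q - p)

theorem isSubgradient_iff_coord (hf : DiscretelyConvex f) {x y a b : ℤ} :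
    IsSubgradient f (x, y) (a, b) ↔
      (-a ≤ f (x - 1, y) - f (x, y) ∧ f (x, y) - f (x + 1, y) ≤ -a) ∧
      (-b ≤ f (x, y - 1) - f (x, y) ∧ f (x, y) - f (x, y + 1) ≤ -b) ∧
      a + b ≤ f (x + 1, y + 1) - f (x, y) ∧ f (x, y) - f (x - 1, y - 1) ≤ a + b := by
  rw [hf.isSubgradient_iff, Fin.forall_fin_succ, Fin.forall_fin_two]
  simp [ray, pair, ← sub_eq_add_neg]

theorem exists_isSubgradient_of_bend_pos (hf : DiscretelyConvex f) {i : Fin 3} {p : ℤ × ℤ}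
    (h : 0 < bend f i p) : ∃ v, IsSubgradient f p v ∧ IsSubgradient f p (v + conormal i) ∧
      IsSubgradient f (p + ray i) v ∧ IsSubgradient f (p + ray i) (v + conormal i) := by
  suffices ∃ v, pair (ray i) v = f (p + ray i) - f p ∧
      IsSubgradient f p v ∧ IsSubgradient f p (v + conormal i) by
    obtain ⟨v, hv, h₁, h₂⟩ := this
    refine ⟨v, h₁, h₂, h₁.of_le ?_, h₂.of_le ?_⟩ <;>
      simp only [add_sub_cancel_left, pair_add_right, hv, pair_ray_conormal] <;> linarith
  obtain ⟨x, y⟩ := p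
  have rhombi := And.intro (And.intro (hf 0 (x, y)) (hf 0 (x + 1, y)))
    (And.intro (And.intro (hf 1 (x, y)) (hf 1 (x, y + 1)))
      (And.intro (hf 2 (x, y)) (hf 2 (x - 1, y - 1))))
  simp only [bend_zero, bend_one, bend_two, add_sub_cancel_right, sub_add_cancel] at rhombi
  fin_cases i
  · let a := f (x, y) - f (x - 1, y)
    let b := min (f (x, y + 1) - f (x, y)) (f (x + 1, y + 1) - f (x, y) - a)
    refine ⟨(a, b), by simp [ray, pair, a, sub_eq_add_neg], hf.isSubgradient_iff_coord.2 ?_,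
      hf.isSubgradient_iff_coord.2 ?_⟩ <;> simp [conormal, bend_zero] at h ⊢ <;> lia
  · let b := f (x, y) - f (x, y - 1)
    let a := min (f (x + 1, y) - f (x, y)) (f (x + 1, y + 1) - f (x, y) - b) - 1
    refine ⟨(a, b), by simp [ray, pair, b, sub_eq_add_neg], hf.isSubgradient_iff_coord.2 ?_,
      hf.isSubgradient_iff_coord.2 ?_⟩ <;> simp [conormal, bend_one] at h ⊢ <;> lia
  · let a := min (f (x + 1, y) - f (x, y)) (f (x + 1, y + 1) - f (x, y) + (f (x, y - 1) - f (x, y)))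
    let b := f (x + 1, y + 1) - f (x, y) - a
    refine ⟨(a, b), by simp [ray, pair, b], hf.isSubgradient_iff_coord.2 ?_,
      hf.isSubgradient_iff_coord.2 ?_⟩ <;> simp [conormal, bend_two] at h ⊢ <;> lia

end DiscretelyConvex

/-! ### Honeycombs -/

/-- The lattice points of the triangle with vertices `(0, 0)`, `(N, 0)` and `(0, N)`. -/
def newtonTriangle (N : ℤ) : Set (ℤ × ℤ) := {v | 0 ≤ v.1 ∧ 0 ≤ v.2 ∧ v.1 + v.2 ≤ N}

/-- The supporting lines of the Newton triangle: `v` lies on side `i` if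
`pair (ray i) v = side N i`. -/
def side (N : ℤ) : Fin 3 → ℤ := ![0, 0, N]

theorem mem_newtonTriangle_iff {N : ℤ} {v : ℤ × ℤ} :
    v ∈ newtonTriangle N ↔ ∀ i, pair (ray i) v ≤ side N i := by
  simp [newtonTriangle, pair, ray, side, Fin.forall_fin_succ]

theorem exists_mem_newtonTriangle_pair_eq_side {N : ℤ} (hN : 0 ≤ N) (i : Fin 3) :
    ∃ v ∈ newtonTriangle N, pair (ray i) v = side N i := by
  fin_cases i
  exacts [⟨(0, 0), by simpa [newtonTriangle], rfl⟩, ⟨(0, 0), by simpa [newtonTriangle], rfl⟩,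
    ⟨(N, 0), by simpa [newtonTriangle], by simp [pair, ray, side]⟩]

/-- The cells of the primal triangulation: the points `(i, j)`, `(i + ε, j)` and `(i, j + ε)` are
the corners of an upward (`ε = 1`) or downward (`ε = -1`) little triangle inside the Newton
triangle. -/
def IsCell (N i j ε : ℤ) : Prop :=
  (ε = 1 ∨ ε = -1) ∧ (0 ≤ i ∧ 0 ≤ j ∧ i + j ≤ N) ∧ 0 ≤ i + ε ∧ 0 ≤ j + ε ∧ i + j + ε ≤ N

theorem exists_isCell_corner {N a b : ℤ} (hN : 0 < N) (hab : (a, b) ∈ newtonTriangle N) :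
    ∃ i j ε, IsCell N i j ε ∧ ((a, b) = (i, j) ∨ (a, b) = (i + ε, j) ∨ (a, b) = (i, j + ε)) := by
  obtain ⟨ha, hb, hab⟩ : 0 ≤ a ∧ 0 ≤ b ∧ a + b ≤ N := hab
  unfold IsCell
  by_cases hlt : a + b < N
  · exact ⟨a, b, 1, by lia, Or.inl rfl⟩
  by_cases ha' : 0 < a
  · exact ⟨a - 1, b, 1, by lia, Or.inr (Or.inl (by simp))⟩
  · exact ⟨a, b - 1, 1, by lia, Or.inr (Or.inr (by simp))⟩

/-- The tropical line polynomial. -/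
def tropLine (p : ℤ × ℤ) : ℤ := max p.1 (max p.2 0)

theorem tropLine_nonneg (p : ℤ × ℤ) : 0 ≤ tropLine p := by simp [tropLine]

theorem tropLine_add_le (p q : ℤ × ℤ) : tropLine (p + q) ≤ tropLine p + tropLine q := by
  simp only [tropLine, Prod.fst_add, Prod.snd_add]; lia

theorem pair_le_mul_tropLine {N : ℤ} {v : ℤ × ℤ} (hv : v ∈ newtonTriangle N) (p : ℤ × ℤ) :
    pair p v ≤ N * tropLine p := by
  obtain ⟨h₁, h₂, h⟩ := hv
  calc
    pair p v ≤ tropLine p * v.1 + tropLine p * v.2 := by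
      unfold pair tropLine
      gcongr <;> simp
    _ = (v.1 + v.2) * tropLine p := by ring
    _ ≤ N * tropLine p := by gcongr; exact tropLine_nonneg p

/-- Tropical polynomials of degree `N`, described by their values on the dual lattice: discretely
convex functions with the asymptotic behaviour of `N • tropLine`. -/
structure IsHoneycomb (N : ℤ) (f : ℤ × ℤ → ℤ) : Prop where
  convex : DiscretelyConvex f
  growth : ∀ i p, f (p + ray i) ≤ f p + side N i
  coercive : ∃ K, ∀ p, N * tropLine p ≤ f p + K

namespace IsHoneycomb

variable {N : ℤ} {f : ℤ × ℤ → ℤ}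

theorem zero : IsHoneycomb 0 fun _ => 0 where
  convex i p := by simp [bend]
  growth i _ := by fin_cases i <;> simp [side]
  coercive := ⟨0, by simp⟩

theorem add {M : ℤ} {g : ℤ × ℤ → ℤ} (hf : IsHoneycomb M f) (hg : IsHoneycomb N g) :
    IsHoneycomb (M + N) fun p => f p + g p where
  convex i p := by
    rw [bend_add]
    exact add_nonneg (hf.convex i p) (hg.convex i p)
  growth i p := by
    have hside : side (M + N) i = side M i + side N i := by fin_cases i <;> simp [side]
    linarith [hf.growth i p, hg.growth i p]
  coercive := by
    obtain ⟨K, hK⟩ := hf.coercive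
    obtain ⟨L, hL⟩ := hg.coercive
    exact ⟨K + L, fun p => by linarith [hK p, hL p]⟩

theorem sum {ι : Type*} {s : Finset ι} {f : ι → ℤ × ℤ → ℤ} (hf : ∀ j ∈ s, IsHoneycomb N (f j)) :
    IsHoneycomb (s.card * N) fun p => ∑ j ∈ s, f j p := by
  induction s using Finset.induction_on with
  | empty => simpa using zero
  | insert a s ha ih =>
    have := (hf a (Finset.mem_insert_self a s)).add
      (ih fun j hj => hf j (Finset.mem_insert_of_mem hj))
    simpa [Finset.sum_insert ha, Finset.card_insert_of_notMem ha, add_mul, add_comm] using this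

theorem translate (hf : IsHoneycomb N f) (hN : 0 ≤ N) (c : ℤ × ℤ) :
    IsHoneycomb N fun p => f (p - c) where
  convex i p := (bend_translate f i p c).symm ▸ hf.convex i (p - c)
  growth i p := by
    have := hf.growth i (p - c)
    rwa [sub_add_eq_add_sub] at this
  coercive := by
    obtain ⟨K, hK⟩ := hf.coercive
    refine ⟨K + N * tropLine c, fun p => ?_⟩
    have h₁ := mul_le_mul_of_nonneg_left (tropLine_add_le (p - c) c) hN
    rw [sub_add_cancel, mul_add] at h₁
    linarith [hK (p - c)]

theorem sub_const (hf : IsHoneycomb N f) (c : ℤ) : IsHoneycomb N fun p => f p - c where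
  convex i p := (bend_sub_const f i p c).symm ▸ hf.convex i p
  growth i p := by linarith [hf.growth i p]
  coercive := by
    obtain ⟨K, hK⟩ := hf.coercive
    exact ⟨K + c, fun p => by linarith [hK p]⟩

theorem mem_newtonTriangle (hf : IsHoneycomb N f) {p v : ℤ × ℤ} (h : IsSubgradient f p v) :
    v ∈ newtonTriangle N := by
  refine mem_newtonTriangle_iff.2 fun i => ?_
  have := h.pair_sub_le (p + ray i)
  rw [add_sub_cancel_left] at this
  linarith [hf.growth i p]

theorem isSubgradient_add_nsmul_ray (hf : IsHoneycomb N f) {i : Fin 3} {p v : ℤ × ℤ}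
    (h : IsSubgradient f p v) (hv : pair (ray i) v = side N i) (n : ℕ) :
    IsSubgradient f (p + n • ray i) v := by
  induction n with
  | zero => simpa using h
  | succ n ih =>
    rw [succ_nsmul, ← add_assoc]
    refine ih.of_le ?_
    rw [add_sub_cancel_left, hv]
    linarith [hf.growth i (p + n • ray i)]

theorem exists_forall_mul_sub_pair_le (hf : IsHoneycomb N f) {m : ℤ} (hm : 0 ≤ m) {V : ℤ × ℤ}
    (hV : V ∈ newtonTriangle (m * N)) : ∃ p, ∀ q, m * f p - pair p V ≤ m * f q - pair q V := by
  obtain ⟨K, hK⟩ := hf.coercive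
  have bounded : ∃ b, ∀ z, (∃ p, m * f p - pair p V = z) → b ≤ z := by
    refine ⟨-(m * K), ?_⟩
    rintro _ ⟨p, rfl⟩
    linarith [pair_le_mul_tropLine hV p, mul_le_mul_of_nonneg_left (hK p) hm]
  obtain ⟨_, ⟨p, rfl⟩, hp⟩ := Int.exists_least_of_bdd bounded ⟨_, 0, rfl⟩
  exact ⟨p, fun q => hp _ ⟨q, rfl⟩⟩

/-- Minimising against the barycentre of the cell forces all three corners to be subgradients. -/
theorem exists_isSubgradient_of_isCell (hf : IsHoneycomb N f) {i j ε : ℤ} (h : IsCell N i j ε) :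
    ∃ p, IsSubgradient f p (i, j) ∧ IsSubgradient f p (i + ε, j) ∧
      IsSubgradient f p (i, j + ε) := by
  unfold IsCell at h
  obtain ⟨p, hp⟩ := hf.exists_forall_mul_sub_pair_le (m := 3) (by simp)
    (V := (3 * i + ε, 3 * j + ε)) ⟨by lia, by lia, by lia⟩
  have slopes (l : Fin 3) : pair (ray l) (3 * i + ε, 3 * j + ε) ≤ 3 * (f (p + ray l) - f p) ∧
      3 * (f p - f (p - ray l)) ≤ pair (ray l) (3 * i + ε, 3 * j + ε) := by
    have h₁ := hp (p + ray l)
    have h₂ := hp (p - ray l)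
    rw [pair_add_left] at h₁
    rw [pair_sub_left] at h₂
    constructor <;> linarith
  refine ⟨p, ?_, ?_, ?_⟩ <;> refine hf.convex.isSubgradient_iff.2 fun l => ?_ <;>
    have := slopes l <;> fin_cases l <;> simp [ray, pair] at this ⊢ <;> lia

/-- Otherwise `f` would grow along the ray by less than its coercivity demands. -/
theorem exists_add_ray_eq (hf : IsHoneycomb N f) (hN : 0 ≤ N) (i : Fin 3) (p : ℤ × ℤ) :
    ∃ n : ℕ, f (p + (n + 1) • ray i) = f (p + n • ray i) + side N i := by
  by_contra! hne
  have slow (n : ℕ) : f (p + n • ray i) + n ≤ f p + n * side N i := by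
    induction n with
    | zero => simp
    | succ n ih =>
      have := hf.growth i (p + n • ray i)
      rw [add_assoc, ← succ_nsmul] at this
      have := lt_of_le_of_ne this (hne n)
      push_cast
      linarith
  obtain ⟨K, hK⟩ := hf.coercive
  obtain ⟨v, hv, hvi⟩ := exists_mem_newtonTriangle_pair_eq_side hN i
  let n := (f p + K - pair p v + 1).toNat
  have hpair : pair (p + n • ray i) v = pair p v + n * side N i := by
    rw [← hvi]
    simp only [pair, nsmul_eq_mul, Prod.fst_add, Prod.fst_mul, Prod.fst_natCast, Prod.snd_add,
      Prod.snd_mul, Prod.snd_natCast]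
    ring
  have := pair_le_mul_tropLine hv (p + n • ray i)
  linarith [hK (p + n • ray i), slow n, Int.self_le_toNat (f p + K - pair p v + 1)]

end IsHoneycomb

/-! ### A honeycomb of concentric hexagons -/

theorem isHoneycomb_tropLine : IsHoneycomb 1 tropLine where
  convex := by
    rintro i ⟨x, y⟩
    fin_cases i <;> simp only [Fin.zero_eta, Fin.mk_one, Fin.reduceFinMk, bend_zero, bend_one,
      bend_two, tropLine] <;> lia
  growth := by
    rintro i ⟨x, y⟩
    fin_cases i <;> simp [tropLine, ray, side] <;> lia
  coercive := ⟨0, by simp⟩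

theorem bend_tropLine_pos_iff {i : Fin 3} {p : ℤ × ℤ} :
    0 < bend tropLine i p ↔ ∃ n : ℕ, p = n • ray i := by
  obtain ⟨x, y⟩ := p
  fin_cases i <;> simp only [Fin.zero_eta, Fin.mk_one, Fin.reduceFinMk, bend_zero, bend_one,
    bend_two, tropLine] <;> constructor
  · exact fun h => ⟨(-x).toNat, by simp [ray]; lia⟩
  · rintro ⟨n, hn⟩; simp [ray] at hn; lia
  · exact fun h => ⟨(-y).toNat, by simp [ray]; lia⟩
  · rintro ⟨n, hn⟩; simp [ray] at hn; lia
  · exact fun h => ⟨x.toNat, by simp [ray]; lia⟩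
  · rintro ⟨n, hn⟩; simp [ray] at hn; lia

/-- The tropical cubic whose curve is the union of the three tropical lines with apexes
`-k • ray l`; the constant makes it agree with `p ↦ p.1 + p.2` at the origin. -/
def cubic (k : ℤ) (p : ℤ × ℤ) : ℤ := ∑ l, tropLine (p - -k • ray l) - k

theorem isHoneycomb_cubic (k : ℤ) : IsHoneycomb 3 (cubic k) := by
  have := (IsHoneycomb.sum (s := Finset.univ) fun l _ =>
    isHoneycomb_tropLine.translate one_pos.le (-k • ray l)).sub_const k
  rwa [Finset.card_fin, Nat.cast_ofNat, mul_one] at this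

theorem bend_cubic (k : ℤ) (i : Fin 3) (p : ℤ × ℤ) :
    bend (cubic k) i p = ∑ l, bend tropLine i (p - -k • ray l) := by
  simp only [← bend_translate tropLine, ← bend_sum]
  exact bend_sub_const _ i p k

theorem bend_cubic_pos_iff {k : ℤ} {i : Fin 3} {p : ℤ × ℤ} :
    0 < bend (cubic k) i p ↔ ∃ l, ∃ n : ℕ, p = -k • ray l + n • ray i := by
  rw [bend_cubic, Finset.sum_pos_iff_of_nonneg fun l _ => isHoneycomb_tropLine.convex i _]
  simp only [Finset.mem_univ, true_and, bend_tropLine_pos_iff, sub_eq_iff_eq_add']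

/-- The norm on the dual lattice whose unit ball is the hexagon spanned by the edge directions. -/
def hexNorm (p : ℤ × ℤ) : ℤ := max |p.1| (max |p.2| |p.1 - p.2|)

theorem hexNorm_nonneg (p : ℤ × ℤ) : 0 ≤ hexNorm p := by simp [hexNorm]

theorem hexNorm_le_iff {p : ℤ × ℤ} {c : ℤ} : hexNorm p ≤ c ↔
    (-c ≤ p.1 ∧ p.1 ≤ c) ∧ (-c ≤ p.2 ∧ p.2 ≤ c) ∧ -c ≤ p.1 - p.2 ∧ p.1 - p.2 ≤ c := by
  simp only [hexNorm, max_le_iff, abs_le]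

section rhombus

variable (i : Fin 3) (p : ℤ × ℤ)

theorem opposite_coord_sum : (p - ray (i + 1)).1 + (p - ray (i + 1)).2 +
    ((p - ray (i + 2)).1 + (p - ray (i + 2)).2) = p.1 + p.2 + ((p + ray i).1 + (p + ray i).2) := by
  fin_cases i <;> simp [ray] <;> ring

theorem hexNorm_add_ray_le : hexNorm (p + ray i) ≤ hexNorm p + 1 := by
  have := hexNorm_le_iff.1 (le_refl (hexNorm p))
  rw [hexNorm_le_iff]
  fin_cases i <;> simp [ray] <;> lia

theorem hexNorm_le_add_ray : hexNorm p ≤ hexNorm (p + ray i) + 1 := by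
  have := hexNorm_le_iff.1 (le_refl (hexNorm (p + ray i)))
  rw [hexNorm_le_iff]
  fin_cases i <;> simp [ray] at this ⊢ <;> lia

theorem max_hexNorm_le : max (hexNorm p) (hexNorm (p + ray i)) ≤
    max (hexNorm (p - ray (i + 1))) (hexNorm (p - ray (i + 2))) := by
  have h₁ := hexNorm_le_iff.1 (le_max_left (hexNorm (p - ray (i + 1))) (hexNorm (p - ray (i + 2))))
  have h₂ := hexNorm_le_iff.1 (le_max_right (hexNorm (p - ray (i + 1))) (hexNorm (p - ray (i + 2))))
  generalize max (hexNorm (p - ray (i + 1))) (hexNorm (p - ray (i + 2))) = c at *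
  rw [max_le_iff, hexNorm_le_iff, hexNorm_le_iff]
  fin_cases i <;> simp [ray] at h₁ h₂ ⊢ <;> omega

end rhombus

theorem cubic_apply (k x y : ℤ) : cubic k (x, y) = max (x - k) (max y 0) + max x (max (y - k) 0) +
    max (x + k) (max (y + k) 0) - k := by
  simp [cubic, Fin.sum_univ_three, tropLine, ray, ← sub_eq_add_neg]

theorem add_hexNorm_le_cubic {k : ℤ} (hk : 0 ≤ k) (p : ℤ × ℤ) :
    p.1 + p.2 + hexNorm p ≤ cubic k p := by
  obtain ⟨x, y⟩ := p
  simp only [hexNorm, abs_eq_max_neg, cubic_apply]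
  lia

theorem cubic_eq_add_hexNorm {k : ℤ} {p : ℤ × ℤ} (hp : hexNorm p ≤ k) :
    cubic k p = p.1 + p.2 + hexNorm p := by
  obtain ⟨x, y⟩ := p
  simp only [hexNorm, abs_eq_max_neg, cubic_apply] at *
  lia

/-- The tropical cubic obtained from `cubic k` by opening its triple point at the origin to a
hexagon of radius `r`. -/
def hexagon (k r : ℤ) (p : ℤ × ℤ) : ℤ := max (p.1 + p.2) (cubic k p - r)

theorem eventually_le_hexNorm (c : ℤ) (i : Fin 3) (p : ℤ × ℤ) :
    ∀ᶠ n : ℕ in Filter.atTop, c ≤ hexNorm (p + n • ray i) := by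
  filter_upwards [Filter.eventually_ge_atTop (c + |p.1| + |p.2|).toNat] with n hn
  obtain ⟨x, y⟩ := p
  rw [Int.toNat_le] at hn
  fin_cases i <;> simp [hexNorm, ray, abs_eq_max_neg] at hn ⊢ <;> lia

section hexagon

variable {k r : ℤ}

theorem hexagon_zero (hk : 0 ≤ k) : hexagon k 0 = cubic k := by
  funext p
  rw [hexagon, sub_zero, max_eq_right]
  linarith [add_hexNorm_le_cubic hk p, hexNorm_nonneg p]

theorem hexagon_eq_cubic_sub (hk : 0 ≤ k) {p : ℤ × ℤ} (hr : r ≤ hexNorm p) :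
    hexagon k r p = cubic k p - r :=
  max_eq_right (by linarith [add_hexNorm_le_cubic hk p])

theorem bend_hexagon_eq_bend_cubic (hk : 0 ≤ k) {i : Fin 3} {p : ℤ × ℤ} (hp : r < hexNorm p) :
    bend (hexagon k r) i p = bend (cubic k) i p := by
  have before (l : Fin 3) : r ≤ hexNorm (p - ray l) := by
    have := hexNorm_add_ray_le l (p - ray l)
    rw [sub_add_cancel] at this
    linarith
  have after : r ≤ hexNorm (p + ray i) := by linarith [hexNorm_le_add_ray i p]
  rw [← bend_sub_const (cubic k) i p r]
  simp only [bend, hexagon_eq_cubic_sub hk, before, after, hp.le]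

theorem bend_hexagon_pos (hk : 0 ≤ k) (hr : r < k) {i : Fin 3} {p : ℤ × ℤ}
    (hp : hexNorm p ≤ r) (hp' : hexNorm (p + ray i) ≤ r)
    (hopp : r < hexNorm (p - ray (i + 1)) ∨ r < hexNorm (p - ray (i + 2))) :
    0 < bend (hexagon k r) i p := by
  have inner {q} (hq : hexNorm q ≤ r) : hexagon k r q = q.1 + q.2 := by
    rw [hexagon, cubic_eq_add_hexNorm (by linarith)]
    exact max_eq_left (by linarith)
  have outer {q} (hq : r < hexNorm q) : q.1 + q.2 < hexagon k r q :=
    lt_max_of_lt_right (by linarith [add_hexNorm_le_cubic hk q])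
  have lower (q) : q.1 + q.2 ≤ hexagon k r q := le_max_left _ _
  have h₁ := lower (p - ray (i + 1))
  have h₂ := lower (p - ray (i + 2))
  have hlin := opposite_coord_sum i p
  rw [bend, inner hp, inner hp']
  rcases hopp with h | h <;> have := outer h <;> linarith

theorem isHoneycomb_hexagon (hk : 0 ≤ k) (hr : r < k) : IsHoneycomb 3 (hexagon k r) where
  convex := by
    -- If the linear term wins at one end of the edge, then that end lies in the ball of radius
    -- `r < k`, both ends lie in the ball where `cubic k` is the norm, and `max_hexNorm_le` applies.
    intro i p
    have hbend := (isHoneycomb_cubic k).convex i p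
    have hmax := max_hexNorm_le i p
    have hadj := hexNorm_add_ray_le i p
    have hadj' := hexNorm_le_add_ray i p
    have hlin := opposite_coord_sum i p
    have lower := add_hexNorm_le_cubic hk
    have upper (q) : hexNorm q ≤ k → _ := cubic_eq_add_hexNorm (k := k) (p := q)
    have hp := upper p
    have hq := upper (p + ray i)
    have h₁ := lower p
    have h₂ := lower (p + ray i)
    have h₃ := lower (p - ray (i + 1))
    have h₄ := lower (p - ray (i + 2))
    unfold bend hexagon at *
    lia
  growth i p := by
    have := (isHoneycomb_cubic k).growth i p
    have hlin : (p + ray i).1 + (p + ray i).2 ≤ p.1 + p.2 + side 3 i := by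
      fin_cases i <;> simp [ray, side]; lia
    unfold hexagon
    lia
  coercive := by
    obtain ⟨K, hK⟩ := (isHoneycomb_cubic k).coercive
    refine ⟨K + r, fun p => ?_⟩
    linarith [hK p, le_max_right (p.1 + p.2) (cubic k p - r), hexagon.eq_1 k r p]

end hexagon

/-- The centres of the three bundles of concentric hexagons making up `honeycomb k`. -/
def center (k : ℤ) : Fin 3 → ℤ × ℤ := ![(0, 0), (k, 0), (k, k)]

/-- The tropical polynomial of degree `9 * k` whose curve consists, around each of three mutually
adjacent centres, of all hexagons of radius less than `k` with the spokes and rays of `cubic k`. -/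
def honeycomb (k : ℕ) (p : ℤ × ℤ) : ℤ := ∑ r ∈ Finset.range k, ∑ j, hexagon k r (p - center k j)

/-- The points where the unbounded rays of the curve of `honeycomb k` start. -/
def apex (k : ℕ) (j l : Fin 3) : ℤ × ℤ := center k j - k • ray l

theorem isHoneycomb_honeycomb (k : ℕ) : IsHoneycomb (9 * k) (honeycomb k) := by
  have := IsHoneycomb.sum (s := Finset.range k) fun r hr =>
    IsHoneycomb.sum (s := Finset.univ) fun j _ => (isHoneycomb_hexagon (Int.natCast_nonneg k)
      (Int.ofNat_lt.2 (Finset.mem_range.1 hr))).translate (by norm_num) (center k j)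
  rw [Finset.card_fin, Finset.card_range, Nat.cast_ofNat] at this
  rw [show (9 * k : ℤ) = k * (3 * 3) by ring]
  exact this

theorem bend_honeycomb_pos_iff {k : ℕ} {i : Fin 3} {p : ℤ × ℤ} : 0 < bend (honeycomb k) i p ↔
    ∃ r < k, ∃ j, 0 < bend (hexagon k r) i (p - center k j) := by
  have hbend : bend (honeycomb k) i p =
      ∑ r ∈ Finset.range k, ∑ j, bend (hexagon k r) i (p - center k j) := by
    simp only [← bend_translate (hexagon k _), ← bend_sum]
    rfl
  have nonneg (r) (hr : r ∈ Finset.range k) (j) : 0 ≤ bend (hexagon k r) i (p - center k j) :=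
    (isHoneycomb_hexagon (Int.natCast_nonneg k)
      (Int.ofNat_lt.2 (Finset.mem_range.1 hr))).convex i _
  rw [hbend, Finset.sum_pos_iff_of_nonneg fun r hr => Finset.sum_nonneg fun j _ => nonneg r hr j]
  simp only [Finset.mem_range]
  refine exists_congr fun r => and_congr_right fun hr => ?_
  rw [Finset.sum_pos_iff_of_nonneg fun j _ => nonneg r (Finset.mem_range.2 hr) j]
  simp only [Finset.mem_univ, true_and]

theorem bend_honeycomb_apex_pos {k : ℕ} (hk : 0 < k) (i j l : Fin 3) (n : ℕ) :
    0 < bend (honeycomb k) i (apex k j l + n • ray i) := by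
  refine bend_honeycomb_pos_iff.2 ⟨0, hk, j, ?_⟩
  rw [Nat.cast_zero, hexagon_zero (Int.natCast_nonneg k)]
  refine bend_cubic_pos_iff.2 ⟨l, n, ?_⟩
  rw [apex, neg_smul, natCast_zsmul]
  abel

theorem eventually_mem_apex_ray (k : ℕ) (i : Fin 3) (p : ℤ × ℤ) :
    ∀ᶠ n : ℕ in Filter.atTop, 0 < bend (honeycomb k) i (p + n • ray i) →
      ∃ j l, ∃ m : ℕ, p + n • ray i = apex k j l + m • ray i := by
  have far := Filter.eventually_all.2 fun j => eventually_le_hexNorm k i (p - center k j)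
  filter_upwards [far] with n hn hpos
  obtain ⟨r, hr, j, hj⟩ := bend_honeycomb_pos_iff.1 hpos
  rw [add_sub_right_comm, bend_hexagon_eq_bend_cubic (Int.natCast_nonneg k)
    ((Int.ofNat_lt.2 hr).trans_le (hn j))] at hj
  obtain ⟨l, m, hm⟩ := bend_cubic_pos_iff.1 hj
  refine ⟨j, l, m, ?_⟩
  calc
    p + n • ray i = center k j + (p - center k j + n • ray i) := by abel
    _ = apex k j l + m • ray i := by rw [hm, apex, neg_smul, natCast_zsmul]; abel

theorem bend_honeycomb_zero_pos {k : ℕ} {j : ℤ} (hj : 0 < j) (hjk : j < k) :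
    0 < bend (honeycomb k) 0 (j + 1, 1) := by
  refine bend_honeycomb_pos_iff.2 ⟨k - 1, by lia, 2, bend_hexagon_pos (by lia) (by lia) ?_ ?_
    (Or.inr ?_)⟩ <;> simp [center, ray, hexNorm, abs_eq_max_neg] <;> lia

theorem bend_honeycomb_one_pos {k : ℕ} {j : ℤ} (hj : 0 < j) (hjk : j < k) :
    0 < bend (honeycomb k) 1 (j, 1) := by
  refine bend_honeycomb_pos_iff.2 ⟨j.toNat, by lia, 0, bend_hexagon_pos (by lia) (by lia) ?_ ?_
    (Or.inr ?_)⟩ <;> simp [center, ray, hexNorm, abs_eq_max_neg] <;> lia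

theorem bend_honeycomb_two_pos {k : ℕ} {j : ℤ} (hj : 0 < j) (hjk : j < k) :
    0 < bend (honeycomb k) 2 (j, 0) := by
  refine bend_honeycomb_pos_iff.2 ⟨k - j.toNat, by lia, 1, bend_hexagon_pos (by lia) (by lia) ?_ ?_
    (Or.inr ?_)⟩ <;> simp [center, ray, hexNorm, abs_eq_max_neg] <;> lia

/-! ### Hive polytopes -/

/-- The affine interpolation of `f` from the corners `(i, j)`, `(i + ε, j)` and `(i, j + ε)` of a
cell, evaluated at the point with coordinates `s` and `t`. -/
def interp (f : ℤ × ℤ → ℝ) (i j ε : ℤ) (s t : ℝ) : ℝ :=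
  f (i, j) + ε * ((s - i) * (f (i + ε, j) - f (i, j)) + (t - j) * (f (i, j + ε) - f (i, j)))

/-- The hive condition in its global form: the interpolation from each cell dominates `f`. -/
def IsHive (N : ℤ) (f : ℤ × ℤ → ℝ) : Prop :=
  ∀ i j ε, IsCell N i j ε → ∀ v ∈ newtonTriangle N, f v ≤ interp f i j ε v.1 v.2

/-- The polytope of hives agreeing with `b` on the two sides of the Newton triangle on the
coordinate axes. Its elements are extended by zero to the whole lattice. -/
def hivePolytope (N : ℤ) (b : ℤ × ℤ → ℝ) : Set (ℤ × ℤ → ℝ) :=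
  {f | IsHive N f ∧ (∀ v ∈ newtonTriangle N, v.1 = 0 ∨ v.2 = 0 → f v = b v) ∧
    ∀ v ∉ newtonTriangle N, f v = 0}

/-- The smallest face of the hive polytope containing `g`: all hive inequalities tight for `g` are
tight. -/
def tightFace (N : ℤ) (g : ℤ × ℤ → ℝ) : Set (ℤ × ℤ → ℝ) :=
  {f ∈ hivePolytope N g | ∀ i j ε, IsCell N i j ε → ∀ v ∈ newtonTriangle N,
    g v = interp g i j ε v.1 v.2 → f v = interp f i j ε v.1 v.2}

theorem continuous_interp (i j ε : ℤ) (s t : ℝ) : Continuous fun f => interp f i j ε s t := by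
  unfold interp; fun_prop

theorem interp_combo (f g : ℤ × ℤ → ℝ) (a b : ℝ) (i j ε : ℤ) (s t : ℝ) :
    interp (a • f + b • g) i j ε s t = a * interp f i j ε s t + b * interp g i j ε s t := by
  simp only [interp, Pi.add_apply, Pi.smul_apply, smul_eq_mul]
  ring

theorem isClosed_hivePolytope (N : ℤ) (b : ℤ × ℤ → ℝ) : IsClosed (hivePolytope N b) := by
  simp only [hivePolytope, IsHive, Set.ofPred_and, Set.ofPred_forall]
  refine .inter ?_ (.inter ?_ ?_)
  · exact isClosed_iInter fun i => isClosed_iInter fun j => isClosed_iInter fun ε =>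
      isClosed_iInter fun _ => isClosed_iInter fun v => isClosed_iInter fun _ =>
      isClosed_le (continuous_apply v) (continuous_interp _ _ _ _ _)
  · exact isClosed_iInter fun v => isClosed_iInter fun _ => isClosed_iInter fun _ =>
      isClosed_eq (continuous_apply v) continuous_const
  · exact isClosed_iInter fun v => isClosed_iInter fun _ =>
      isClosed_eq (continuous_apply v) continuous_const

/-- The cell at the origin bounds a hive from above; the cell at a point `v` bounds it from below
through the two boundary points on the antidiagonal of `v`. -/
theorem exists_bounds_hivePolytope (N : ℤ) (b : ℤ × ℤ → ℝ) (v : ℤ × ℤ) :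
    ∃ l u, ∀ f ∈ hivePolytope N b, f v ∈ Set.Icc l u := by
  obtain ⟨s, t⟩ := v
  by_cases hv : (s, t) ∈ newtonTriangle N
  swap
  · exact ⟨0, 0, fun f hf => by rw [hf.2.2 _ hv]; simp⟩
  obtain ⟨hs, ht, hst⟩ : 0 ≤ s ∧ 0 ≤ t ∧ s + t ≤ N := id hv
  obtain rfl | hs := hs.eq_or_lt
  · exact ⟨_, _, fun f hf => by rw [hf.2.1 _ hv (Or.inl rfl)]; exact Set.left_mem_Icc.2 le_rfl⟩
  refine ⟨(s * b (s + t, 0) + t * b (0, s + t)) / (s + t), interp b 0 0 1 s t, fun f hf => ?_⟩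
  obtain ⟨hive, bdry, -⟩ := hf
  have hs' : (0 : ℝ) < s := by exact_mod_cast hs
  have ht' : (0 : ℝ) ≤ t := by exact_mod_cast ht
  constructor
  · have hcell : IsCell N (s - 1) t 1 := by unfold IsCell; lia
    have h₁ := mul_le_mul_of_nonneg_left
      (hive _ _ _ hcell (s + t, 0) ⟨by lia, le_rfl, by lia⟩) hs'.le
    have h₂ := mul_le_mul_of_nonneg_left
      (hive _ _ _ hcell (0, s + t) ⟨le_rfl, by lia, by lia⟩) ht'
    rw [bdry _ ⟨by lia, le_rfl, by lia⟩ (Or.inr rfl)] at h₁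
    rw [bdry _ ⟨le_rfl, by lia, by lia⟩ (Or.inl rfl)] at h₂
    rw [div_le_iff₀ (by linarith)]
    simp only [interp, sub_add_cancel] at h₁ h₂
    push_cast at h₁ h₂
    linarith
  · have hcell : IsCell N 0 0 1 := by unfold IsCell; lia
    have h := hive 0 0 1 hcell (s, t) hv
    simpa only [interp, bdry (0, 0) ⟨le_rfl, le_rfl, by lia⟩ (Or.inl rfl),
      bdry (0 + 1, 0) ⟨by lia, le_rfl, by lia⟩ (Or.inr rfl),
      bdry (0, 0 + 1) ⟨le_rfl, by lia, by lia⟩ (Or.inl rfl)] using h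

theorem isCompact_hivePolytope (N : ℤ) (b : ℤ × ℤ → ℝ) : IsCompact (hivePolytope N b) := by
  choose l u h using exists_bounds_hivePolytope N b
  exact (isCompact_univ_pi fun v => isCompact_Icc).of_isClosed_subset (isClosed_hivePolytope N b)
    fun f hf v _ => h v f hf

theorem isClosed_tightFace (N : ℤ) (g : ℤ × ℤ → ℝ) : IsClosed (tightFace N g) := by
  simp only [tightFace, Set.ofPred_and, Set.ofPred_forall]
  exact (isClosed_hivePolytope N g).inter <| isClosed_iInter fun i => isClosed_iInter fun j =>
    isClosed_iInter fun ε => isClosed_iInter fun _ => isClosed_iInter fun v =>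
    isClosed_iInter fun _ => isClosed_iInter fun _ =>
    isClosed_eq (continuous_apply v) (continuous_interp _ _ _ _ _)

theorem isExtreme_tightFace (N : ℤ) (g : ℤ × ℤ → ℝ) :
    IsExtreme ℝ (hivePolytope N g) (tightFace N g) := by
  refine ⟨fun f hf => hf.1, ?_⟩
  rintro f₁ hf₁ f₂ hf₂ f hf ⟨a, b, ha, hb, -, rfl⟩
  refine ⟨hf₁, fun i j ε hcell v hv htight => (hf₁.1 i j ε hcell v hv).antisymm ?_⟩
  have h := hf.2 i j ε hcell v hv htight
  rw [interp_combo] at h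
  have h₂ := mul_le_mul_of_nonneg_left (hf₂.1 i j ε hcell v hv) hb.le
  refine le_of_mul_le_mul_left ?_ ha
  simp only [Pi.add_apply, Pi.smul_apply, smul_eq_mul] at h
  linarith

theorem exists_mem_extremePoints_mem_tightFace {N : ℤ} {g : ℤ × ℤ → ℝ}
    (hg : g ∈ hivePolytope N g) : ∃ f ∈ (hivePolytope N g).extremePoints ℝ, f ∈ tightFace N g := by
  have hcompact := (isCompact_hivePolytope N g).of_isClosed_subset (isClosed_tightFace N g)
    (isExtreme_tightFace N g).1
  obtain ⟨f, hf⟩ := hcompact.extremePoints_nonempty ⟨g, hg, fun _ _ _ _ _ _ h => h⟩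
  exact ⟨f, (isExtreme_tightFace N g).extremePoints_subset_extremePoints hf, hf.1⟩

/-! ### Slopes along a honeycomb -/

/-- The hive dual to `φ`: the concave conjugate of `φ` divided by `k`, extended by zero outside the
Newton triangle. -/
def dualHive (N : ℤ) (k : ℕ) (φ : ℤ × ℤ → ℤ) (v : ℤ × ℤ) : ℝ :=
  if v ∈ newtonTriangle N then ((⨅ p, φ p - pair p v : ℤ) : ℝ) / k else 0

/-- `T i p` is `k` times the common decrement of `f` along the edges with direction `conormal i` of
the tile dual to `p`. -/
structure IsTileSlope (φ : ℤ × ℤ → ℤ) (k : ℕ) (f : ℤ × ℤ → ℝ) (T : Fin 3 → ℤ × ℤ → ℝ) :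
    Prop where
  sum_eq_zero : ∀ p, ∑ i, T i p = 0
  apply_edge : ∀ {i p v}, IsSubgradient φ p v → IsSubgradient φ p (v + conormal i) →
    k * (f v - f (v + conormal i)) = T i p

/-- Every point of the tile dual to `p` lies on the face of the cell at `(i, j)` spanned by those
corners of the cell which belong to the tile. -/
def TileLiesOnFace (φ : ℤ × ℤ → ℤ) (p : ℤ × ℤ) (i j ε : ℤ) : Prop :=
  ∀ a b, IsSubgradient φ p (a, b) → (¬ IsSubgradient φ p (i, j) → (a - i) + (b - j) = ε) ∧
    (¬ IsSubgradient φ p (i + ε, j) → a = i) ∧ (¬ IsSubgradient φ p (i, j + ε) → b = j)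

namespace DiscretelyConvex

variable {φ : ℤ × ℤ → ℤ} {p : ℤ × ℤ} {i j a b : ℤ}

theorem eq_of_row (hφ : DiscretelyConvex φ) (h : IsSubgradient φ p (i, j))
    (h' : IsSubgradient φ p (i + 1, j)) (up : ¬ IsSubgradient φ p (i, j + 1))
    (down : ¬ IsSubgradient φ p (i + 1, j + -1)) (hab : IsSubgradient φ p (a, b)) : b = j := by
  obtain ⟨x, y⟩ := p
  rw [hφ.isSubgradient_iff_coord] at *
  omega

theorem eq_of_column (hφ : DiscretelyConvex φ) (h : IsSubgradient φ p (i, j))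
    (h' : IsSubgradient φ p (i, j + 1)) (up : ¬ IsSubgradient φ p (i + 1, j))
    (down : ¬ IsSubgradient φ p (i + -1, j + 1)) (hab : IsSubgradient φ p (a, b)) : a = i := by
  obtain ⟨x, y⟩ := p
  rw [hφ.isSubgradient_iff_coord] at *
  omega

theorem eq_of_diagonal (hφ : DiscretelyConvex φ) (h : IsSubgradient φ p (i + 1, j))
    (h' : IsSubgradient φ p (i, j + 1)) (up : ¬ IsSubgradient φ p (i, j))
    (down : ¬ IsSubgradient φ p (i + 1, j + 1)) (hab : IsSubgradient φ p (a, b)) :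
    (a - i) + (b - j) = 1 := by
  obtain ⟨x, y⟩ := p
  rw [hφ.isSubgradient_iff_coord] at *
  omega

theorem eq_of_point (hφ : DiscretelyConvex φ) (h : IsSubgradient φ p (i, j))
    (h₁ : ¬ IsSubgradient φ p (i + 1, j)) (h₂ : ¬ IsSubgradient φ p (i - 1, j))
    (h₃ : ¬ IsSubgradient φ p (i, j + 1)) (h₄ : ¬ IsSubgradient φ p (i, j - 1))
    (h₅ : ¬ IsSubgradient φ p (i + 1, j - 1)) (h₆ : ¬ IsSubgradient φ p (i - 1, j + 1))
    (hab : IsSubgradient φ p (a, b)) : a = i ∧ b = j := by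
  obtain ⟨x, y⟩ := p
  rw [hφ.isSubgradient_iff_coord] at *
  omega

end DiscretelyConvex

namespace IsHoneycomb

variable {N : ℤ} {k : ℕ} {φ : ℤ × ℤ → ℤ} {p v : ℤ × ℤ}

theorem dualHive_eq (hφ : IsHoneycomb N φ) (hv : IsSubgradient φ p v) :
    dualHive N k φ v = (φ p - pair p v : ℤ) / k := by
  rw [dualHive, if_pos (hφ.mem_newtonTriangle hv)]
  congr 2
  exact IsLeast.csInf_eq ⟨⟨p, rfl⟩, by rintro _ ⟨q, rfl⟩; exact hv q⟩

theorem dualHive_le (hφ : IsHoneycomb N φ) (hv : v ∈ newtonTriangle N) (p : ℤ × ℤ) :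
    dualHive N k φ v ≤ (φ p - pair p v : ℤ) / k := by
  obtain ⟨q, hq⟩ := hφ.exists_forall_mul_sub_pair_le zero_le_one (by rwa [one_mul])
  simp only [one_mul] at hq
  rw [hφ.dualHive_eq (p := q) hq]
  refine div_le_div_of_nonneg_right ?_ (Nat.cast_nonneg k)
  exact_mod_cast hq p

theorem dualHive_mem_hivePolytope (hφ : IsHoneycomb N φ) (k : ℕ) :
    dualHive N k φ ∈ hivePolytope N (dualHive N k φ) := by
  refine ⟨fun i j ε hcell v hv => ?_, fun _ _ _ => rfl, fun v hv => if_neg hv⟩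
  obtain ⟨p, h₀, h₁, h₂⟩ := hφ.exists_isSubgradient_of_isCell hcell
  have hε : (ε : ℝ) ^ 2 = 1 := by rcases hcell.1 with rfl | rfl <;> norm_num
  refine (hφ.dualHive_le hv p).trans_eq ?_
  rw [interp, hφ.dualHive_eq h₀, hφ.dualHive_eq h₁, hφ.dualHive_eq h₂]
  simp only [pair]
  push_cast
  linear_combination ((p.1 : ℝ) * (v.1 - i) + p.2 * (v.2 - j)) / k * hε

theorem isCell_and_tileLiesOnFace_of_edge (hφ : IsHoneycomb N φ)
    (triangle : ∀ i j ε, (ε = 1 ∨ ε = -1) → IsSubgradient φ p (i, j) →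
      IsSubgradient φ p (i + ε, j) → ¬ IsSubgradient φ p (i, j + ε)) {i j : ℤ}
    (edge : (IsSubgradient φ p (i, j) ∧ IsSubgradient φ p (i + 1, j)) ∨
      (IsSubgradient φ p (i, j) ∧ IsSubgradient φ p (i, j + 1)) ∨
      IsSubgradient φ p (i + 1, j) ∧ IsSubgradient φ p (i, j + 1)) :
    IsCell N i j 1 ∧ TileLiesOnFace φ p i j 1 := by
  refine ⟨⟨Or.inl rfl, ?_⟩, fun a b hab => ?_⟩
  · have mem {a b} (h : IsSubgradient φ p (a, b)) : 0 ≤ a ∧ 0 ≤ b ∧ a + b ≤ N :=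
      hφ.mem_newtonTriangle h
    rcases edge with ⟨h, h'⟩ | ⟨h, h'⟩ | ⟨h, h'⟩ <;> have := mem h <;> have := mem h' <;> lia
  rcases edge with ⟨h₀, h₁⟩ | ⟨h₀, h₂⟩ | ⟨h₁, h₂⟩
  · have down := triangle (i + 1) j (-1) (Or.inr rfl) h₁ (by simpa using h₀)
    exact ⟨(absurd h₀ ·), (absurd h₁ ·), fun h₂ => hφ.convex.eq_of_row h₀ h₁ h₂ down hab⟩
  · have down := mt (triangle i (j + 1) (-1) (Or.inr rfl) h₂) (not_not_intro (by simpa using h₀))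
    exact ⟨(absurd h₀ ·), fun h₁ => hφ.convex.eq_of_column h₀ h₂ h₁ down hab, (absurd h₂ ·)⟩
  · have down := mt (triangle (i + 1) (j + 1) (-1) (Or.inr rfl) · (by simpa using h₂))
      (not_not_intro (by simpa using h₁))
    exact ⟨fun h₀ => hφ.convex.eq_of_diagonal h₁ h₂ h₀ down hab, (absurd h₁ ·), (absurd h₂ ·)⟩

/-- A tile without cells is a segment, a point or empty, hence covered by a face of some cell. -/
theorem exists_isCell_tileLiesOnFace (hφ : IsHoneycomb N φ) (hN : 0 < N) (p : ℤ × ℤ) :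
    ∃ i j ε, IsCell N i j ε ∧ TileLiesOnFace φ p i j ε := by
  by_cases triangle : ∃ i j ε, (ε = 1 ∨ ε = -1) ∧ IsSubgradient φ p (i, j) ∧
      IsSubgradient φ p (i + ε, j) ∧ IsSubgradient φ p (i, j + ε)
  · obtain ⟨i, j, ε, hε, h₀, h₁, h₂⟩ := triangle
    exact ⟨i, j, ε, ⟨hε, hφ.mem_newtonTriangle h₀, (hφ.mem_newtonTriangle h₁).1,
      (hφ.mem_newtonTriangle h₂).2.1, by linarith [(hφ.mem_newtonTriangle h₁).2.2]⟩,
      fun _ _ _ => ⟨(absurd h₀ ·), (absurd h₁ ·), (absurd h₂ ·)⟩⟩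
  push Not at triangle
  by_cases edge : ∃ i j, (IsSubgradient φ p (i, j) ∧ IsSubgradient φ p (i + 1, j)) ∨
      (IsSubgradient φ p (i, j) ∧ IsSubgradient φ p (i, j + 1)) ∨
      IsSubgradient φ p (i + 1, j) ∧ IsSubgradient φ p (i, j + 1)
  · obtain ⟨i, j, h⟩ := edge
    exact ⟨i, j, 1, hφ.isCell_and_tileLiesOnFace_of_edge triangle h⟩
  push Not at edge
  by_cases point : ∃ i j, IsSubgradient φ p (i, j)
  · obtain ⟨i, j, h⟩ := point
    obtain ⟨i', j', ε, hcell, hcorner⟩ := exists_isCell_corner hN (hφ.mem_newtonTriangle h)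
    refine ⟨i', j', ε, hcell, fun a b hab => ?_⟩
    obtain ⟨rfl, rfl⟩ := hφ.convex.eq_of_point h ((edge i j).1 h)
      (fun h' => (edge (i - 1) j).1 h' (by simpa using h))
      ((edge i j).2.1 h) (fun h' => (edge i (j - 1)).2.1 h' (by simpa using h))
      (fun h' => (edge i (j - 1)).2.2 h' (by simpa using h))
      (fun h' => (edge (i - 1) j).2.2 (by simpa using h) h') hab
    simp only [Prod.mk.injEq] at hcorner
    obtain ⟨rfl, rfl⟩ | ⟨rfl, rfl⟩ | ⟨rfl, rfl⟩ := hcorner <;> simp [h]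
  · exact ⟨0, 0, 1, by unfold IsCell; lia, fun a b hab => absurd ⟨a, b, hab⟩ point⟩

/-- In barycentric coordinates only the corners belonging to the tile contribute. -/
theorem exists_isCell_dualHive_eq_interp (hφ : IsHoneycomb N φ) (hN : 0 < N) (k : ℕ) (p : ℤ × ℤ) :
    ∃ i j ε, IsCell N i j ε ∧ ∀ v, IsSubgradient φ p v →
      dualHive N k φ v = interp (dualHive N k φ) i j ε v.1 v.2 := by
  obtain ⟨i, j, ε, hcell, hface⟩ := hφ.exists_isCell_tileLiesOnFace hN p
  refine ⟨i, j, ε, hcell, ?_⟩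
  rintro ⟨a, b⟩ hv
  obtain ⟨h₀, h₁, h₂⟩ := hface a b hv
  have hε : (ε : ℝ) ^ 2 = 1 := by rcases hcell.1 with rfl | rfl <;> norm_num
  have corner {c : ℝ} {w : ℤ × ℤ} (h : ¬ IsSubgradient φ p w → c = 0) :
      c * dualHive N k φ w = c * ((φ p - pair p w : ℤ) / k) := by
    by_cases hw : IsSubgradient φ p w
    · rw [hφ.dualHive_eq hw]
    · simp only [h hw, zero_mul]
  have e₀ := corner (c := 1 - ε * (a - i) - ε * (b - j)) fun h => by
    have : (a - i + (b - j) : ℝ) = ε := by exact_mod_cast h₀ h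
    linear_combination -hε - ε * this
  have e₁ := corner (c := ε * (a - i)) fun h => by rw [h₁ h]; ring
  have e₂ := corner (c := ε * (b - j)) fun h => by rw [h₂ h]; ring
  rw [hφ.dualHive_eq hv, interp]
  simp only [pair] at *
  push_cast at *
  linear_combination -e₀ - e₁ - e₂ + ((p.1 : ℝ) * (a - i) + p.2 * (b - j)) / k * hε

theorem exists_isTileSlope (hφ : IsHoneycomb N φ) (hN : 0 < N) {f : ℤ × ℤ → ℝ}
    (hf : f ∈ tightFace N (dualHive N k φ)) : ∃ T, IsTileSlope φ k f T := by
  choose i j ε hcell htight using hφ.exists_isCell_dualHive_eq_interp hN k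
  let s (p) := k * ε p * (f (i p + ε p, j p) - f (i p, j p))
  let t (p) := k * ε p * (f (i p, j p + ε p) - f (i p, j p))
  have tile {p v} (hv : IsSubgradient φ p v) :
      k * f v = k * f (i p, j p) + (v.1 - i p) * s p + (v.2 - j p) * t p := by
    rw [hf.2 _ _ _ (hcell p) v (hφ.mem_newtonTriangle hv) (htight p v hv), interp]
    ring
  refine ⟨![t, -s, s - t], fun p => ?_, fun {l p v} h h' => ?_⟩
  · simp only [Fin.sum_univ_three, Matrix.cons_val, Pi.neg_apply, Pi.sub_apply]
    ring
  rw [mul_sub, tile h, tile h']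
  fin_cases l <;> simp [conormal] <;> ring

end IsHoneycomb

namespace IsTileSlope

variable {N : ℤ} {k : ℕ} {φ : ℤ × ℤ → ℤ} {f : ℤ × ℤ → ℝ} {T : Fin 3 → ℤ × ℤ → ℝ} {i : Fin 3}
  {p : ℤ × ℤ}

theorem apply_add_ray (hT : IsTileSlope φ k f T) (hφ : DiscretelyConvex φ)
    (h : 0 < bend φ i p) : T i (p + ray i) = T i p := by
  obtain ⟨v, h₁, h₂, h₃, h₄⟩ := hφ.exists_isSubgradient_of_bend_pos h
  rw [← hT.apply_edge h₁ h₂, ← hT.apply_edge h₃ h₄]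

theorem apply_add_nsmul_ray (hT : IsTileSlope φ k f T) (hφ : DiscretelyConvex φ)
    (h : ∀ n : ℕ, 0 < bend φ i (p + n • ray i)) (n : ℕ) : T i (p + n • ray i) = T i p := by
  induction n with
  | zero => simp
  | succ n ih => rw [succ_nsmul, ← add_assoc, hT.apply_add_ray hφ (h n), ih]

/-- Far out, the edges dual to the ray lie on the corresponding side, where `f` agrees with the dual
hive. -/
theorem apply_of_forall_bend_pos (hT : IsTileSlope φ k f T) (hφ : IsHoneycomb N φ) (hN : 0 ≤ N)
    (hk : 0 < k) (h : ∀ n : ℕ, 0 < bend φ i (p + n • ray i))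
    (hside : ∀ v ∈ newtonTriangle N, pair (ray i) v = side N i → f v = dualHive N k φ v) :
    T i p = pair p (conormal i) := by
  obtain ⟨n, hn⟩ := hφ.exists_add_ray_eq hN i p
  obtain ⟨v, h₁, h₂, h₃, -⟩ := hφ.convex.exists_isSubgradient_of_bend_pos (h n)
  have hv : pair (ray i) v = side N i := by
    have forth := h₁.pair_sub_le (p + n • ray i + ray i)
    have back := h₃.pair_sub_le (p + n • ray i)
    rw [add_sub_cancel_left, add_assoc, ← succ_nsmul, hn] at forth
    rw [sub_add_cancel_left, add_assoc, ← succ_nsmul, hn] at back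
    simp only [pair, Prod.fst_neg, Prod.snd_neg] at forth back ⊢
    linarith
  have hv' : pair (ray i) (v + conormal i) = side N i := by
    rw [pair_add_right, hv, pair_ray_conormal, add_zero]
  have hk' : (k : ℝ) ≠ 0 := by positivity
  rw [← hT.apply_add_nsmul_ray hφ.convex h n, ← hT.apply_edge h₁ h₂,
    hside _ (hφ.mem_newtonTriangle h₁) hv, hside _ (hφ.mem_newtonTriangle h₂) hv',
    hφ.dualHive_eq h₁, hφ.dualHive_eq h₂, ← sub_div, mul_div_cancel₀ _ hk']
  have hray : pair (p + n • ray i) (conormal i) = pair p (conormal i) := by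
    rw [pair_add_left, add_eq_left]
    simpa [pair, mul_assoc, ← mul_add] using Or.inr (pair_ray_conormal i)
  rw [pair_add_right, hray]
  push_cast
  ring

end IsTileSlope

theorem IsHoneycomb.exists_isSubgradient_of_edge {N : ℤ} {φ : ℤ × ℤ → ℤ} (hφ : IsHoneycomb N φ)
    {i : Fin 3} {v : ℤ × ℤ} (hv : v ∈ newtonTriangle N) (hv' : v + conormal i ∈ newtonTriangle N) :
    ∃ p, IsSubgradient φ p v ∧ IsSubgradient φ p (v + conormal i) := by
  obtain ⟨a, b⟩ := v
  obtain ⟨ha, hb, hab⟩ : 0 ≤ a ∧ 0 ≤ b ∧ a + b ≤ N := hv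
  fin_cases i
  · obtain ⟨-, hb', -⟩ : 0 ≤ a + 0 ∧ 0 ≤ b + -1 ∧ a + 0 + (b + -1) ≤ N := hv'
    obtain ⟨p, h₀, -, h₂⟩ := hφ.exists_isSubgradient_of_isCell
      (show IsCell N a (b - 1) 1 by unfold IsCell; lia)
    exact ⟨p, by simpa using h₂, by simpa [conormal, sub_eq_add_neg] using h₀⟩
  · obtain ⟨-, -, hab'⟩ : 0 ≤ a + 1 ∧ 0 ≤ b + 0 ∧ a + 1 + (b + 0) ≤ N := hv'
    obtain ⟨p, h₀, h₁, -⟩ := hφ.exists_isSubgradient_of_isCell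
      (show IsCell N a b 1 by unfold IsCell; lia)
    exact ⟨p, h₀, by simpa [conormal] using h₁⟩
  · obtain ⟨ha', -, -⟩ : 0 ≤ a + -1 ∧ 0 ≤ b + 1 ∧ a + -1 + (b + 1) ≤ N := hv'
    obtain ⟨p, -, h₁, h₂⟩ := hφ.exists_isSubgradient_of_isCell
      (show IsCell N (a - 1) b 1 by unfold IsCell; lia)
    exact ⟨p, by simpa using h₁, by simpa [conormal, sub_eq_add_neg] using h₂⟩

section honeycomb

variable {k : ℕ} {f : ℤ × ℤ → ℝ} {T : Fin 3 → ℤ × ℤ → ℝ}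

theorem IsTileSlope.apply_apex_add_nsmul_ray (hT : IsTileSlope (honeycomb k) k f T) (hk : 0 < k)
    (hf : f ∈ tightFace (9 * k) (dualHive (9 * k) k (honeycomb k))) (i j l : Fin 3) (n : ℕ) :
    T i (apex k j l + n • ray i) = pair (apex k j l) (conormal i) := by
  have hφ := isHoneycomb_honeycomb k
  have hpos (i : Fin 3) := bend_honeycomb_apex_pos hk i j l
  have agree {v} := hf.1.2.1 v
  have h₀ : T 0 (apex k j l) = pair (apex k j l) (conormal 0) :=
    hT.apply_of_forall_bend_pos hφ (by positivity) hk (hpos 0) fun v hv hside =>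
      agree hv (Or.inl (by simpa [pair, ray, side] using hside))
  have h₁ : T 1 (apex k j l) = pair (apex k j l) (conormal 1) :=
    hT.apply_of_forall_bend_pos hφ (by positivity) hk (hpos 1) fun v hv hside =>
      agree hv (Or.inr (by simpa [pair, ray, side] using hside))
  have h₂ : T 2 (apex k j l) = pair (apex k j l) (conormal 2) := by
    have hsum := hT.sum_eq_zero (apex k j l)
    rw [Fin.sum_univ_three, h₀, h₁] at hsum
    simp only [pair, conormal, Matrix.cons_val] at hsum ⊢
    push_cast at hsum ⊢
    linarith
  rw [hT.apply_add_nsmul_ray hφ.convex (hpos i)]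
  fin_cases i
  exacts [h₀, h₁, h₂]

/-- Following the zigzag through the points `(j, 0)` and `(j, 1)`, the slope `T 1` changes by the
same amount in every step. -/
theorem IsTileSlope.apply_row (hT : IsTileSlope (honeycomb k) k f T) (hk : 0 < k)
    (hf : f ∈ tightFace (9 * k) (dualHive (9 * k) k (honeycomb k))) {j : ℕ} (hjk : j < k) :
    T 0 (j + 1, 1) = T 0 (1, 1) ∧ T 1 (j + 1, 1) = T 1 (1, 1) - j * T 0 (1, 1) := by
  have hφ := (isHoneycomb_honeycomb k).convex
  have hsum (p) : T 0 p + T 1 p + T 2 p = 0 := by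
    simpa only [Fin.sum_univ_three] using hT.sum_eq_zero p
  have axis {j : ℤ} (hjk : j < k) : T 0 (j, 0) = 0 := by
    have := hT.apply_apex_add_nsmul_ray hk hf 0 0 0 (k - j).toNat
    simpa [apex, center, ray, pair, conormal, hjk.le] using this
  induction j with
  | zero => simp
  | succ j ih =>
    obtain ⟨ih₀, ih₁⟩ := ih (by lia)
    have hj : (0 : ℤ) < j + 1 := by positivity
    have hjk' : (j + 1 : ℤ) < k := by exact_mod_cast hjk
    have h₀ := hT.apply_add_ray hφ (bend_honeycomb_zero_pos hj hjk')
    have h₁ := hT.apply_add_ray hφ (bend_honeycomb_one_pos hj hjk')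
    have h₂ := hT.apply_add_ray hφ (bend_honeycomb_two_pos hj hjk')
    simp only [ray, Matrix.cons_val, Prod.mk_add_mk, add_neg_cancel_right, add_neg_cancel, add_zero,
      zero_add] at h₀ h₁ h₂
    have := hsum (j + 1, 0)
    have := hsum (j + 1 + 1, 1)
    have := axis hjk'
    push_cast
    constructor <;> linarith

/-- The vertical ray through `(k, 1)` gives `T 1 (k, 1) = k`, and the diagonal ray through `(1, 1)`
forces each of the `k - 1` steps of the zigzag to add `T 1 (1, 1)`. -/
theorem IsTileSlope.apply_one_one (hT : IsTileSlope (honeycomb k) k f T) (hk : 0 < k)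
    (hf : f ∈ tightFace (9 * k) (dualHive (9 * k) k (honeycomb k))) : T 1 (1, 1) = 1 := by
  have hk₁ : 1 ≤ k := hk
  have last : T 1 (k, 1) = k := by
    have := hT.apply_apex_add_nsmul_ray hk hf 1 1 1 (k - 1)
    simpa [apex, center, ray, pair, conormal, Nat.cast_sub hk₁] using this
  have diagonal : T 2 (1, 1) = 0 := by
    have := hT.apply_apex_add_nsmul_ray hk hf 2 0 2 (k + 1)
    simpa [apex, center, ray, pair, conormal] using this
  have first : T 0 (1, 1) = -T 1 (1, 1) := by
    have := hT.sum_eq_zero (1, 1)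
    rw [Fin.sum_univ_three, diagonal] at this
    linarith
  obtain ⟨-, h⟩ := hT.apply_row hk hf (show k - 1 < k by lia)
  rw [Nat.cast_sub hk₁, Nat.cast_sub hk₁, Nat.cast_one, Nat.cast_one, sub_add_cancel, last,
    first] at h
  refine mul_left_cancel₀ (show (k : ℝ) ≠ 0 by positivity) ?_
  linarith

theorem pair_apex (k : ℕ) (j l : Fin 3) (v : ℤ × ℤ) :
    pair (apex k j l) v = k * pair (apex 1 j l) v := by
  fin_cases j <;> simp [apex, center, pair] <;> ring

theorem exists_edge_of_mem_tightFace (hk : 0 < k)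
    (hf : f ∈ tightFace (9 * k) (dualHive (9 * k) k (honeycomb k))) :
    ∃ i, ∃ v ∈ newtonTriangle (9 * k), v + conormal i ∈ newtonTriangle (9 * k) ∧
      k * (f v - f (v + conormal i)) = 1 := by
  have hφ := isHoneycomb_honeycomb k
  obtain ⟨T, hT⟩ := hφ.exists_isTileSlope (by positivity) hf
  have hpos : 0 < bend (honeycomb k) 1 (1, 1) := by
    obtain rfl | hk := (show 1 ≤ k from hk).eq_or_lt
    · simpa [apex, center, ray] using bend_honeycomb_apex_pos hk 1 1 1 0
    · exact bend_honeycomb_one_pos one_pos (by exact_mod_cast hk)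
  obtain ⟨v, h, h', -⟩ := hφ.convex.exists_isSubgradient_of_bend_pos hpos
  exact ⟨1, v, hφ.mem_newtonTriangle h, hφ.mem_newtonTriangle h',
    (hT.apply_edge h h').trans (hT.apply_one_one hk hf)⟩

theorem exists_int_sub_eq_of_mem_tightFace (hk : 0 < k)
    (hf : f ∈ tightFace (9 * k) (dualHive (9 * k) k (honeycomb k))) {i : Fin 3} {v : ℤ × ℤ}
    (hv : v ∈ newtonTriangle (9 * k)) (hv' : v + conormal i ∈ newtonTriangle (9 * k))
    (hside : pair (ray i) v = side (9 * k) i) : ∃ z : ℤ, f v - f (v + conormal i) = z := by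
  have hφ := isHoneycomb_honeycomb k
  have hside' : pair (ray i) (v + conormal i) = side (9 * k) i := by
    rw [pair_add_right, hside, pair_ray_conormal, add_zero]
  obtain ⟨T, hT⟩ := hφ.exists_isTileSlope (by positivity) hf
  obtain ⟨p, h, h'⟩ := hφ.exists_isSubgradient_of_edge hv hv'
  have hn (n : ℕ) := hφ.isSubgradient_add_nsmul_ray h hside n
  have hn' (n : ℕ) := hφ.isSubgradient_add_nsmul_ray h' hside' n
  obtain ⟨n, hmem⟩ := (eventually_mem_apex_ray k i p).exists
  have hbend : 0 < bend (honeycomb k) i (p + n • ray i) :=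
    (hn n).bend_pos (by simpa only [succ_nsmul, add_assoc] using hn' (n + 1))
  obtain ⟨j, l, m, hp⟩ := hmem hbend
  have hedge := hT.apply_edge (hn n) (hn' n)
  rw [hp, hT.apply_apex_add_nsmul_ray hk hf, pair_apex] at hedge
  exact ⟨_, mul_left_cancel₀ (show (k : ℝ) ≠ 0 by positivity) (by exact_mod_cast hedge)⟩

theorem exists_mem_extremePoints_hivePolytope (hk : 0 < k) :
    ∃ g, ∃ f ∈ (hivePolytope (9 * k) g).extremePoints ℝ,
      (∃ i, ∃ v ∈ newtonTriangle (9 * k), v + conormal i ∈ newtonTriangle (9 * k) ∧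
        k * (f v - f (v + conormal i)) = 1) ∧
      ∀ i, ∀ v ∈ newtonTriangle (9 * k), v + conormal i ∈ newtonTriangle (9 * k) →
        pair (ray i) v = side (9 * k) i → ∃ z : ℤ, f v - f (v + conormal i) = z := by
  obtain ⟨f, hext, hf⟩ := exists_mem_extremePoints_mem_tightFace
    ((isHoneycomb_honeycomb k).dualHive_mem_hivePolytope k)
  exact ⟨_, f, hext, exists_edge_of_mem_tightFace hk hf,
    fun _ _ => exists_int_sub_eq_of_mem_tightFace hk hf⟩

end honeycomb

/-! ### Triangular grids -/

/-- The linear coordinates `(s, t) ↦ s • ξ₁ + t • (ξ₁ + ξ₂)` on the plane. -/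
def skew : (ℝ × ℝ) ≃ₗ[ℝ] Pt where
  toFun x := (x.1 + x.2 / 2, x.2 * (Real.sqrt 3 / 2))
  invFun P := (P.1 - P.2 / Real.sqrt 3, 2 * P.2 / Real.sqrt 3)
  map_add' x y := by ext <;> simp <;> ring
  map_smul' a x := by ext <;> simp <;> ring
  left_inv x := by ext <;> simp <;> field_simp; ring
  right_inv P := by ext <;> simp <;> field_simp; ring

/-- The vertex of the triangular lattice of the plane with given coordinates in the primal
lattice. -/
def gridVertex : ℤ × ℤ →+ Pt :=
  skew.toLinearMap.toAddMonoidHom.comp ((Int.castAddHom ℝ).prodMap (Int.castAddHom ℝ))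

/-- The directed edge of the triangular lattice with start `v` and direction `conormal i`. -/
def gridEdge (i : Fin 3) (v : ℤ × ℤ) : Ed := (gridVertex v, gridVertex (v + conormal i))

theorem gridVertex_apply (v : ℤ × ℤ) : gridVertex v = skew (v.1, v.2) := rfl

theorem gridVertex_injective : Function.Injective gridVertex := fun v w h => by
  simpa [gridVertex_apply, Prod.ext_iff] using h

theorem gridEdge_inj {i j : Fin 3} {v w : ℤ × ℤ} : gridEdge i v = gridEdge j w ↔ i = j ∧ v = w := by
  have hinj : Function.Injective conormal := by decide
  constructor
  · intro h
    obtain ⟨h, h'⟩ := Prod.ext_iff.1 h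
    obtain rfl := gridVertex_injective h
    exact ⟨hinj (add_left_cancel (gridVertex_injective h')), rfl⟩
  · rintro ⟨rfl, rfl⟩
    rfl

theorem gridVertex_conormal (i : Fin 3) : gridVertex (conormal (i + 1)) = xiv i := by
  fin_cases i <;> ext <;> simp [gridVertex_apply, conormal, skew, xiv] <;> norm_num

theorem isLatticeVec_gridVertex (v : ℤ × ℤ) : IsLatticeVec (gridVertex v) := by
  refine ⟨v.1 + v.2, v.2, ?_⟩
  rw [← gridVertex_conormal, ← gridVertex_conormal, Int.cast_smul_eq_zsmul, Int.cast_smul_eq_zsmul,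
    ← map_zsmul, ← map_zsmul, ← map_add]
  congr 1
  ext <;> simp [conormal]

theorem gridVertex_zsmul_mem_segment {n N : ℤ} (hn : 0 ≤ n) (hnN : n ≤ N) (w : ℤ × ℤ) :
    gridVertex (n • w) ∈ segment ℝ (gridVertex (0, 0)) (gridVertex (N • w)) := by
  have hn' : (0 : ℝ) ≤ n := by exact_mod_cast hn
  have hnN' : (n : ℝ) ≤ N := by exact_mod_cast hnN
  have hdiv : (n : ℝ) / N ≤ 1 := div_le_one_of_le₀ hnN' (hn'.trans hnN')
  have hmul : (n : ℝ) / N * N = n := div_mul_cancel_of_imp fun h => hn'.antisymm' (hnN'.trans_eq h)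
  refine ⟨1 - n / N, n / N, sub_nonneg.2 hdiv, div_nonneg hn' (hn'.trans hnN'),
    sub_add_cancel _ _, ?_⟩
  rw [show gridVertex (0, 0) = 0 from map_zero _, smul_zero, zero_add, map_zsmul, map_zsmul,
    ← Int.cast_smul_eq_zsmul ℝ, ← Int.cast_smul_eq_zsmul ℝ, smul_smul, hmul]

theorem mem_convexHull_triangle {a b m s t : ℝ} (hm : m ≠ 0) :
    (s, t) ∈ convexHull ℝ {(a, b), (a + m, b), (a, b + m)} ↔
      0 ≤ (s - a) / m ∧ 0 ≤ (t - b) / m ∧ (s - a) / m + (t - b) / m ≤ 1 := by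
  constructor
  · have hconv : Convex ℝ {x : ℝ × ℝ |
        0 ≤ (x.1 - a) / m ∧ 0 ≤ (x.2 - b) / m ∧ (x.1 - a) / m + (x.2 - b) / m ≤ 1} := by
      rintro ⟨s, t⟩ ⟨h₁, h₂, h₃⟩ ⟨s', t'⟩ ⟨h₁', h₂', h₃'⟩ u v hu hv huv
      obtain rfl : u = 1 - v := by linarith
      have es : ((1 - v) * s + v * s' - a) / m = (1 - v) * ((s - a) / m) + v * ((s' - a) / m) := by
        ring
      have et : ((1 - v) * t + v * t' - b) / m = (1 - v) * ((t - b) / m) + v * ((t' - b) / m) := by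
        ring
      simp only [Set.mem_ofPred_eq, Prod.fst_add, Prod.snd_add, Prod.smul_fst, Prod.smul_snd,
        smul_eq_mul, es, et] at *
      refine ⟨by positivity, by positivity, ?_⟩
      nlinarith
    refine fun h => convexHull_min ?_ hconv h
    rintro _ (rfl | rfl | rfl) <;> simp [hm]
  · rintro ⟨h₁, h₂, h₃⟩
    have hmem := (convex_convexHull ℝ {(a, b), (a + m, b), (a, b + m)}).sum_mem
      (t := Finset.univ) (w := ![1 - (s - a) / m - (t - b) / m, (s - a) / m, (t - b) / m])
      (z := ![(a, b), (a + m, b), (a, b + m)])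
      (fun i _ => by fin_cases i <;> simp <;> linarith)
      (by simp only [Fin.sum_univ_three, Matrix.cons_val]; ring)
      (fun i _ => subset_convexHull ℝ _ (by fin_cases i <;> simp))
    convert hmem using 1
    ext <;> simp [Fin.sum_univ_three] <;> field_simp <;> ring

theorem skew_mem_convexHull_gridVertex {i j m : ℤ} (hm : m ≠ 0) {s t : ℝ} :
    skew (s, t) ∈ convexHull ℝ {gridVertex (i, j), gridVertex (i + m, j), gridVertex (i, j + m)} ↔
      0 ≤ (s - i) / m ∧ 0 ≤ (t - j) / m ∧ (s - i) / m + (t - j) / m ≤ 1 := by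
  rw [← mem_convexHull_triangle (by exact_mod_cast hm),
    ← skew.injective.mem_set_image (a := (s, t)),
    ← LinearEquiv.coe_coe, LinearMap.image_convexHull]
  simp [Set.image_insert_eq, gridVertex_apply]

theorem not_collinear_gridVertex {N : ℤ} (hN : N ≠ 0) :
    ¬ Collinear ℝ {gridVertex (0, 0), gridVertex (N, 0), gridVertex (0, N)} := by
  rw [collinear_iff_of_mem (p₀ := gridVertex (0, 0)) (by simp)]
  rintro ⟨v, hv⟩
  obtain ⟨⟨a, b⟩, rfl⟩ := skew.surjective v
  obtain ⟨r, hr⟩ := hv (gridVertex (N, 0)) (by simp)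
  obtain ⟨r', hr'⟩ := hv (gridVertex (0, N)) (by simp)
  have h₀ : gridVertex (0, 0) = 0 := map_zero _
  simp only [h₀, vadd_eq_add, add_zero, gridVertex_apply, ← map_smul, skew.injective.eq_iff,
    Prod.smul_mk, Prod.mk.injEq, smul_eq_mul, Int.cast_zero] at hr hr'
  have : (N : ℝ) * N = 0 := by
    linear_combination hr.1 * N + r * a * hr'.2 - r' * a * hr.2
  exact hN (by exact_mod_cast mul_self_eq_zero.1 this)

/-- The triples `(i, j, ε)` with `IsCell N i j ε`. -/
def cells (N : ℤ) : Finset (ℤ × ℤ × ℤ) :=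
  (Finset.Icc 0 N ×ˢ Finset.Icc 0 N ×ˢ {1, -1}).filter fun c => IsCell N c.1 c.2.1 c.2.2

/-- The little triangle of the plane with vertices `(i, j)`, `(i + ε, j)` and `(i, j + ε)`. The base
of a downward triangle is its top left vertex. -/
def cellTriangle (i j ε : ℤ) : GridTriangle :=
  if ε = 1 then ⟨gridVertex (i, j), true⟩ else ⟨gridVertex (i - 1, j), false⟩

section cell

variable {N i j ε : ℤ}

theorem mem_cells : (i, j, ε) ∈ cells N ↔ IsCell N i j ε := by
  rw [cells, Finset.mem_filter]
  simp only [Finset.mem_product, Finset.mem_Icc, Finset.mem_insert, Finset.mem_singleton, IsCell]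
  omega

theorem IsCell.corner_mem (h : IsCell N i j ε) : (i, j) ∈ newtonTriangle N := h.2.1

theorem IsCell.fst_corner_mem (h : IsCell N i j ε) : (i + ε, j) ∈ newtonTriangle N :=
  ⟨h.2.2.1, h.2.1.2.1, by linarith [h.2.2.2.2]⟩

theorem IsCell.snd_corner_mem (h : IsCell N i j ε) : (i, j + ε) ∈ newtonTriangle N :=
  ⟨h.2.1.1, h.2.2.2.1, by linarith [h.2.2.2.2]⟩

theorem mem_region_cellTriangle (hε : ε = 1 ∨ ε = -1) {s t : ℝ} :
    skew (s, t) ∈ (cellTriangle i j ε).region ↔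
      0 ≤ ε * (s - i) ∧ 0 ≤ ε * (t - j) ∧ ε * (s - i) + ε * (t - j) ≤ 1 := by
  have hregion : (cellTriangle i j ε).region =
      convexHull ℝ {gridVertex (i, j), gridVertex (i + ε, j), gridVertex (i, j + ε)} := by
    rcases hε with rfl | rfl
    · simp [cellTriangle, GridTriangle.region, GridTriangle.v0, GridTriangle.v1, GridTriangle.v2,
        ← gridVertex_conormal, ← map_add, conormal]
    · simp [cellTriangle, GridTriangle.region, GridTriangle.v0, GridTriangle.v1, GridTriangle.v2,
        ← gridVertex_conormal, ← map_add, conormal, Set.insert_comm, ← sub_eq_add_neg]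
  rw [hregion, skew_mem_convexHull_gridVertex (by lia)]
  rcases hε with rfl | rfl <;> simp [div_neg]

theorem gridVertex_mem_region_cellTriangle (hε : ε = 1 ∨ ε = -1) {v : ℤ × ℤ} :
    gridVertex v ∈ (cellTriangle i j ε).region ↔ v = (i, j) ∨ v = (i + ε, j) ∨ v = (i, j + ε) := by
  rw [gridVertex_apply, mem_region_cellTriangle hε]
  norm_cast
  simp only [Prod.ext_iff]
  obtain rfl | rfl := hε <;> omega

/-- The shift from the start of an edge in direction `conormal l` to the corner `(i, j)` of the
upward (`ε = 1`) or downward (`ε = -1`) cell containing the edge. -/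
def cornerShift (ε : ℤ) (l : Fin 3) : ℤ × ℤ :=
  if ε = 1 then ![(0, -1), (0, 0), (-1, 0)] l else ![(0, 0), (1, 0), (0, 1)] l

theorem mem_edgeFinset_cellTriangle (hε : ε = 1 ∨ ε = -1) {e : Ed} :
    e ∈ (cellTriangle i j ε).edgeFinset ↔ ∃ l, e = gridEdge l ((i, j) - cornerShift ε l) := by
  rcases hε with rfl | rfl
  · have hedges : (cellTriangle i j 1).edgeFinset =
        {gridEdge 1 (i, j), gridEdge 2 (i + 1, j), gridEdge 0 (i, j + 1)} := by
      simp [cellTriangle, GridTriangle.edgeFinset, GridTriangle.e0, GridTriangle.e1,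
        GridTriangle.e2, GridTriangle.v0, GridTriangle.v1, GridTriangle.v2, ← gridVertex_conormal,
        ← map_add, conormal, gridEdge]
    simp [hedges, Fin.exists_fin_succ, cornerShift, or_comm, or_left_comm]
  · have hedges : (cellTriangle i j (-1)).edgeFinset =
        {gridEdge 0 (i, j), gridEdge 1 (i - 1, j), gridEdge 2 (i, j - 1)} := by
      simp [cellTriangle, GridTriangle.edgeFinset, GridTriangle.e0, GridTriangle.e1,
        GridTriangle.e2, GridTriangle.v0, GridTriangle.v1, GridTriangle.v2, ← gridVertex_conormal,
        ← map_add, conormal, gridEdge, sub_eq_add_neg, Finset.insert_comm]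
    simp [hedges, Fin.exists_fin_succ, cornerShift]

theorem gridEdge_mem_edgeFinset_cellTriangle (hε : ε = 1 ∨ ε = -1) {l : Fin 3} {v : ℤ × ℤ} :
    gridEdge l v ∈ (cellTriangle i j ε).edgeFinset ↔ (i, j) = v + cornerShift ε l := by
  simp only [mem_edgeFinset_cellTriangle hε, gridEdge_inj, exists_eq_left', eq_sub_iff_add_eq,
    eq_comm]

theorem isCell_add_cornerShift_one {l : Fin 3} {v : ℤ × ℤ} :
    IsCell N (v + cornerShift 1 l).1 (v + cornerShift 1 l).2 1 ↔
      v ∈ newtonTriangle N ∧ v + conormal l ∈ newtonTriangle N := by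
  fin_cases l <;> simp [IsCell, cornerShift, newtonTriangle, conormal] <;> omega

theorem isCell_add_cornerShift_neg_one {l : Fin 3} {v : ℤ × ℤ} :
    IsCell N (v + cornerShift (-1) l).1 (v + cornerShift (-1) l).2 (-1) ↔
      (v ∈ newtonTriangle N ∧ v + conormal l ∈ newtonTriangle N) ∧ pair (ray l) v ≠ side N l := by
  fin_cases l <;> simp [IsCell, cornerShift, newtonTriangle, conormal, pair, ray, side] <;> omega

end cell

section region

variable {N : ℤ}

theorem exists_isCell_mem_region (hN : 0 < N) {s t : ℝ} (hs : 0 ≤ s) (ht : 0 ≤ t)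
    (hst : s + t ≤ N) : ∃ i j ε, IsCell N i j ε ∧ skew (s, t) ∈ (cellTriangle i j ε).region := by
  have hs₁ := Int.floor_le s
  have hs₂ := Int.lt_floor_add_one s
  have ht₁ := Int.floor_le t
  have ht₂ := Int.lt_floor_add_one t
  have hs₀ : 0 ≤ ⌊s⌋ := Int.floor_nonneg.2 hs
  have ht₀ : 0 ≤ ⌊t⌋ := Int.floor_nonneg.2 ht
  generalize ⌊s⌋ = i at *
  generalize ⌊t⌋ = j at *
  have hij : i + j ≤ N := by exact_mod_cast (by linarith : (i : ℝ) + j ≤ N)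
  obtain down | up := lt_or_ge ((i : ℝ) + j + 1) (s + t)
  · have : i + j + 1 < N := by exact_mod_cast (by linarith : (i : ℝ) + j + 1 < N)
    refine ⟨i + 1, j + 1, -1, by unfold IsCell; lia,
      (mem_region_cellTriangle (Or.inr rfl)).2 ⟨?_, ?_, ?_⟩⟩ <;> push_cast <;> linarith
  obtain hij | rfl := hij.lt_or_eq
  · exact ⟨i, j, 1, by unfold IsCell; lia, (mem_region_cellTriangle (Or.inl rfl)).2 (by
      push_cast; exact ⟨by linarith, by linarith, by linarith⟩)⟩
  push_cast at hst
  obtain rfl | hi := hs₀.eq_or_lt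
  · refine ⟨0, j - 1, 1, by unfold IsCell; lia,
      (mem_region_cellTriangle (Or.inl rfl)).2 ⟨?_, ?_, ?_⟩⟩ <;> push_cast at * <;> linarith
  · refine ⟨i - 1, j, 1, by unfold IsCell; lia,
      (mem_region_cellTriangle (Or.inl rfl)).2 ⟨?_, ?_, ?_⟩⟩ <;> push_cast <;> linarith

theorem mem_iUnion_region_iff (hN : 0 < N) {s t : ℝ} :
    skew (s, t) ∈ (⋃ T ∈ (cells N).image fun c => cellTriangle c.1 c.2.1 c.2.2, T.region) ↔
      0 ≤ s ∧ 0 ≤ t ∧ s + t ≤ N := by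
  simp only [Finset.mem_image, Prod.exists, mem_cells, Set.mem_iUnion, exists_prop]
  constructor
  · rintro ⟨_, ⟨i, j, ε, h, rfl⟩, hmem⟩
    obtain ⟨h₁, h₂, h₃⟩ := (mem_region_cellTriangle h.1).1 hmem
    obtain ⟨hε, ⟨hi, hj, hij⟩, hi', hj', hij'⟩ := h
    rify at hi hj hij hi' hj' hij'
    obtain rfl | rfl := hε <;> push_cast at * <;> exact ⟨by linarith, by linarith, by linarith⟩
  · rintro ⟨hs, ht, hst⟩
    obtain ⟨i, j, ε, h, hmem⟩ := exists_isCell_mem_region hN hs ht hst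
    exact ⟨_, ⟨i, j, ε, h, rfl⟩, hmem⟩

theorem iUnion_region_eq (hN : 0 < N) :
    (⋃ T ∈ (cells N).image fun c => cellTriangle c.1 c.2.1 c.2.2, T.region) =
      convexHull ℝ {gridVertex (0, 0), gridVertex (N, 0), gridVertex (0, N)} := by
  ext P
  obtain ⟨⟨s, t⟩, rfl⟩ := skew.surjective P
  have hN' : (0 : ℝ) < N := by exact_mod_cast hN
  have hull := skew_mem_convexHull_gridVertex (i := 0) (j := 0) (s := s) (t := t) hN.ne'
  simp only [zero_add, Int.cast_zero, sub_zero, ← add_div, div_le_one hN',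
    le_div_iff₀ hN', zero_mul] at hull
  rw [mem_iUnion_region_iff hN, hull]

end region

/-- The 3-side grid of size `N` whose vertices are the points of the Newton triangle. -/
def triangularGrid (N : ℤ) (hN : 0 < N) : ConvexGrid where
  tris := (cells N).image fun c => cellTriangle c.1 c.2.1 c.2.2
  nonempty := ⟨_, Finset.mem_image_of_mem _ <|
    mem_cells.2 (show IsCell N 0 0 1 by unfold IsCell; lia)⟩
  aligned T hT T' hT' := by
    have hbase (c : ℤ × ℤ × ℤ) : ∃ v, (cellTriangle c.1 c.2.1 c.2.2).base = gridVertex v := by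
      unfold cellTriangle
      split_ifs <;> exact ⟨_, rfl⟩
    obtain ⟨c, -, rfl⟩ := Finset.mem_image.1 hT
    obtain ⟨c', -, rfl⟩ := Finset.mem_image.1 hT'
    obtain ⟨v, hv⟩ := hbase c
    obtain ⟨v', hv'⟩ := hbase c'
    rw [hv, hv', ← map_sub]
    exact isLatticeVec_gridVertex _
  convex := by
    rw [iUnion_region_eq hN]
    exact convex_convexHull ℝ _

section triangularGrid

variable {N : ℤ} (hN : 0 < N)

theorem mem_tris_triangularGrid {T : GridTriangle} :
    T ∈ (triangularGrid N hN).tris ↔ ∃ i j ε, IsCell N i j ε ∧ cellTriangle i j ε = T := by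
  simp only [triangularGrid, Finset.mem_image, Prod.exists, mem_cells]

theorem region_triangularGrid : (triangularGrid N hN).region =
    convexHull ℝ {gridVertex (0, 0), gridVertex (N, 0), gridVertex (0, N)} :=
  iUnion_region_eq hN

theorem skew_mem_region_triangularGrid {s t : ℝ} :
    skew (s, t) ∈ (triangularGrid N hN).region ↔ 0 ≤ s ∧ 0 ≤ t ∧ s + t ≤ N :=
  mem_iUnion_region_iff hN

theorem gridVertex_mem_region_triangularGrid {v : ℤ × ℤ} (hv : v ∈ newtonTriangle N) :
    gridVertex v ∈ (triangularGrid N hN).region := by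
  obtain ⟨h₁, h₂, h⟩ := hv
  rw [gridVertex_apply, skew_mem_region_triangularGrid]
  exact ⟨by exact_mod_cast h₁, by exact_mod_cast h₂, by exact_mod_cast h⟩

theorem mem_edges_triangularGrid {e : Ed} : e ∈ (triangularGrid N hN).edges ↔
    ∃ l v, (v ∈ newtonTriangle N ∧ v + conormal l ∈ newtonTriangle N) ∧ e = gridEdge l v := by
  simp only [ConvexGrid.edges, Finset.mem_biUnion, mem_tris_triangularGrid]
  constructor
  · rintro ⟨_, ⟨i, j, ε, hcell, rfl⟩, he⟩
    obtain ⟨l, rfl⟩ := (mem_edgeFinset_cellTriangle hcell.1).1 he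
    refine ⟨l, _, ?_, rfl⟩
    obtain rfl | rfl := hcell.1
    · exact isCell_add_cornerShift_one.1 (by simpa using hcell)
    · exact (isCell_add_cornerShift_neg_one.1 (by simpa using hcell)).1
  · rintro ⟨l, v, hv, rfl⟩
    exact ⟨_, ⟨_, _, 1, isCell_add_cornerShift_one.2 hv, rfl⟩,
      (gridEdge_mem_edgeFinset_cellTriangle (Or.inl rfl)).2 rfl⟩

theorem gridEdge_mem_edges_triangularGrid {l : Fin 3} {v : ℤ × ℤ} :
    gridEdge l v ∈ (triangularGrid N hN).edges ↔
      v ∈ newtonTriangle N ∧ v + conormal l ∈ newtonTriangle N := by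
  simp only [mem_edges_triangularGrid, gridEdge_inj]
  exact ⟨by rintro ⟨_, _, h, rfl, rfl⟩; exact h, fun h => ⟨l, v, h, rfl, rfl⟩⟩

theorem gridEdge_mem_boundary_triangularGrid {l : Fin 3} {v : ℤ × ℤ} :
    gridEdge l v ∈ (triangularGrid N hN).boundary ↔
      (v ∈ newtonTriangle N ∧ v + conormal l ∈ newtonTriangle N) ∧ pair (ray l) v = side N l := by
  rw [ConvexGrid.boundary, Finset.mem_filter, gridEdge_mem_edges_triangularGrid]
  refine and_congr_right fun hv => ?_
  set up := cellTriangle (v + cornerShift 1 l).1 (v + cornerShift 1 l).2 1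
  set down := cellTriangle (v + cornerShift (-1) l).1 (v + cornerShift (-1) l).2 (-1)
  have hup : up ∈ (triangularGrid N hN).tris.filter fun T => gridEdge l v ∈ T.edgeFinset :=
    Finset.mem_filter.2 ⟨(mem_tris_triangularGrid hN).2
      ⟨_, _, 1, isCell_add_cornerShift_one.2 hv, rfl⟩,
      (gridEdge_mem_edgeFinset_cellTriangle (Or.inl rfl)).2 rfl⟩
  constructor
  · intro hcard
    by_contra hside
    have hdown : down ∈ (triangularGrid N hN).tris.filter fun T => gridEdge l v ∈ T.edgeFinset :=
      Finset.mem_filter.2 ⟨(mem_tris_triangularGrid hN).2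
        ⟨_, _, -1, isCell_add_cornerShift_neg_one.2 ⟨hv, hside⟩, rfl⟩,
        (gridEdge_mem_edgeFinset_cellTriangle (Or.inr rfl)).2 rfl⟩
    have := congrArg GridTriangle.up (Finset.card_le_one.1 hcard.le _ hup _ hdown)
    simp [up, down, cellTriangle] at this
  · intro hside
    refine Finset.card_eq_one.2 ⟨up, Finset.eq_singleton_iff_unique_mem.2 ⟨hup, fun T hT => ?_⟩⟩
    obtain ⟨hT, he⟩ := Finset.mem_filter.1 hT
    obtain ⟨i, j, ε, hcell, rfl⟩ := (mem_tris_triangularGrid hN).1 hT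
    have hij := (gridEdge_mem_edgeFinset_cellTriangle hcell.1).1 he
    obtain rfl | rfl := hcell.1
    · simp only [up, ← hij]
    · refine absurd hside (isCell_add_cornerShift_neg_one.1 ?_).2
      rwa [← hij]

theorem card_boundary_triangularGrid_le : (triangularGrid N hN).boundary.card ≤ 3 * N.toNat := by
  have hsub : (triangularGrid N hN).boundary ⊆ (Finset.univ ×ˢ Finset.range N.toNat).image
      fun x : Fin 3 × ℕ => gridEdge x.1
        (![(0, (x.2 : ℤ) + 1), ((x.2 : ℤ), 0), ((x.2 : ℤ) + 1, N - 1 - x.2)] x.1) := by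
    intro e he
    obtain ⟨l, v, -, rfl⟩ := (mem_edges_triangularGrid hN).1 (Finset.mem_filter.1 he).1
    obtain ⟨⟨hv, hv'⟩, hside⟩ := (gridEdge_mem_boundary_triangularGrid hN).1 he
    simp only [Finset.mem_image, Finset.mem_product, Finset.mem_univ, true_and, Finset.mem_range,
      Prod.exists, gridEdge_inj]
    refine ⟨l, (![v.2 - 1, v.1, v.1 - 1] l).toNat, ?_, rfl, ?_⟩
    all_goals
      fin_cases l <;> simp [newtonTriangle, conormal, pair, ray, side, Prod.ext_iff] at * <;> omega
  calc
    _ ≤ _ := Finset.card_le_card hsub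
    _ ≤ _ := Finset.card_image_le
    _ = 3 * N.toNat := by simp

theorem gridEdge_mem_sideEdges_fst {n : ℤ} (hn : 0 ≤ n) (hnN : n < N) : gridEdge 1 (n, 0) ∈
    SideEdges (triangularGrid N hN) (gridVertex (0, 0)) (gridVertex (N, 0)) := by
  refine Finset.mem_filter.2 ⟨(gridEdge_mem_boundary_triangularGrid hN).2 ?_, ?_, ?_⟩
  · exact ⟨⟨⟨hn, le_rfl, by lia⟩, show 0 ≤ n + 1 by lia, le_rfl, show n + 1 + 0 ≤ N by lia⟩,
      by simp [pair, ray, side]⟩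
  · simpa [gridEdge] using gridVertex_zsmul_mem_segment hn hnN.le (1, 0)
  · simpa [gridEdge, conormal] using gridVertex_zsmul_mem_segment (by lia : 0 ≤ n + 1) hnN (1, 0)

theorem gridEdge_mem_sideEdges_snd {n : ℤ} (hn : 0 < n) (hnN : n ≤ N) : gridEdge 0 (0, n) ∈
    SideEdges (triangularGrid N hN) (gridVertex (0, 0)) (gridVertex (0, N)) := by
  refine Finset.mem_filter.2 ⟨(gridEdge_mem_boundary_triangularGrid hN).2 ?_, ?_, ?_⟩
  · exact ⟨⟨⟨le_rfl, hn.le, by lia⟩, le_rfl, show 0 ≤ n + -1 by lia, show 0 + (n + -1) ≤ N by lia⟩,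
      by simp [pair, ray, side]⟩
  · simpa [gridEdge] using gridVertex_zsmul_mem_segment hn.le hnN (0, 1)
  · simpa [gridEdge, conormal] using
      gridVertex_zsmul_mem_segment (by lia : 0 ≤ n + -1) (by lia : n + -1 ≤ N) (0, 1)

end triangularGrid

/-! ### Hives and concave cocirculations -/

/-- The interpolation `interp f i j ε` as an affine function on the plane. -/
def interpMap (f : ℤ × ℤ → ℝ) (i j ε : ℤ) : Pt →ᵃ[ℝ] ℝ :=
  (((ε * (f (i + ε, j) - f (i, j))) • LinearMap.fst ℝ ℝ ℝ +
    (ε * (f (i, j + ε) - f (i, j))) • LinearMap.snd ℝ ℝ ℝ) ∘ₗ skew.symm.toLinearMap).toAffineMap +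
    AffineMap.const ℝ Pt (interp f i j ε 0 0)

theorem interpMap_skew (f : ℤ × ℤ → ℝ) (i j ε : ℤ) (s t : ℝ) :
    interpMap f i j ε (skew (s, t)) = interp f i j ε s t := by
  simp only [interpMap, interp, AffineMap.coe_add, LinearMap.coe_toAffineMap, LinearMap.coe_comp,
    LinearEquiv.coe_coe, AffineMap.coe_const, Pi.add_apply, Function.comp_apply,
    LinearEquiv.symm_apply_apply, LinearMap.add_apply, LinearMap.smul_apply, LinearMap.fst_apply,
    LinearMap.snd_apply, smul_eq_mul, Function.const_apply]
  ring

theorem interp_affineMap (φ : Pt →ᵃ[ℝ] ℝ) {i j ε : ℤ} (hε : ε = 1 ∨ ε = -1) (s t : ℝ) :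
    interp (fun v => φ (gridVertex v)) i j ε s t = φ (skew (s, t)) := by
  have hφ (s t : ℝ) : φ (skew (s, t)) =
      s * φ.linear (skew (1, 0)) + t * φ.linear (skew (0, 1)) + φ 0 := by
    have hst : skew (s, t) = s • skew (1, 0) + t • skew (0, 1) := by simp [← map_smul, ← map_add]
    rw [congrFun φ.decomp (skew (s, t)), Pi.add_apply, hst, map_add, map_smul, map_smul,
      smul_eq_mul, smul_eq_mul]
  simp only [interp, gridVertex_apply, hφ]
  obtain rfl | rfl := hε <;> push_cast <;> ring

theorem interp_eq_of_mem_region (f : ℤ × ℤ → ℝ) {i j ε : ℤ} (hε : ε = 1 ∨ ε = -1) {v : ℤ × ℤ}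
    (hv : gridVertex v ∈ (cellTriangle i j ε).region) : interp f i j ε v.1 v.2 = f v := by
  obtain rfl | rfl | rfl := (gridVertex_mem_region_cellTriangle hε).1 hv <;>
    obtain rfl | rfl := hε <;> simp [interp]

theorem le_affineMap_of_concaveOn {E : Type*} [AddCommGroup E] [Module ℝ E] {s : Set E} {g : E → ℝ}
    (hg : ConcaveOn ℝ s g) {φ : E →ᵃ[ℝ] ℝ} {x y : E} (hx : x ∈ s) (hy : y ∈ s) {a b : ℝ}
    (ha : 0 ≤ a) (hb : 0 < b) (hab : a + b = 1) (hgx : g x = φ x)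
    (hgxy : g (a • x + b • y) = φ (a • x + b • y)) : g y ≤ φ y := by
  have h := hg.2 hx hy ha hb.le hab
  rw [hgxy, Convex.combo_affine_apply hab, hgx, add_le_add_iff_left] at h
  exact le_of_mul_le_mul_left h hb

/-- The function `f` on the Newton triangle is a potential for the cochain `h` on the edges of the
triangular grid. -/
def IsPotential (N : ℤ) (f : ℤ × ℤ → ℝ) (h : Ed → ℝ) : Prop :=
  ∀ l, ∀ v ∈ newtonTriangle N, v + conormal l ∈ newtonTriangle N →
    h (gridEdge l v) = f (v + conormal l) - f v

section hive

variable {N : ℤ} {f : ℤ × ℤ → ℝ}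

theorem IsHive.interp_le_interp (hf : IsHive N f) {i j ε i' j' ε' : ℤ} (hc : IsCell N i j ε)
    (hc' : IsCell N i' j' ε') {s t : ℝ} (hst : skew (s, t) ∈ (cellTriangle i' j' ε').region) :
    interp f i' j' ε' s t ≤ interp f i j ε s t := by
  obtain ⟨hs, ht, hst⟩ := (mem_region_cellTriangle hc'.1).1 hst
  have h₀ := mul_le_mul_of_nonneg_left (hf i j ε hc _ hc'.corner_mem) (sub_nonneg.2 hst)
  have h₁ := mul_le_mul_of_nonneg_left (hf i j ε hc _ hc'.fst_corner_mem) hs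
  have h₂ := mul_le_mul_of_nonneg_left (hf i j ε hc _ hc'.snd_corner_mem) ht
  simp only [interp] at *
  obtain rfl | rfl := hc'.1 <;> push_cast at * <;> linear_combination h₀ + h₁ + h₂

theorem IsHive.exists_concaveOn (hN : 0 < N) (hf : IsHive N f) :
    ∃ g : Pt → ℝ, ConcaveOn ℝ (triangularGrid N hN).region g ∧
      (∀ T ∈ (triangularGrid N hN).tris, AffineOn g T.region) ∧
      ∀ v ∈ newtonTriangle N, g (gridVertex v) = f v := by
  have hne : (cells N).Nonempty := Finset.image_nonempty.1 (triangularGrid N hN).nonempty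
  let g : Pt → ℝ := fun P => (cells N).inf' hne fun c => interpMap f c.1 c.2.1 c.2.2 P
  have hg {i j ε : ℤ} (hc : IsCell N i j ε) {s t : ℝ}
      (hst : skew (s, t) ∈ (cellTriangle i j ε).region) : g (skew (s, t)) = interp f i j ε s t := by
    refine le_antisymm ?_ (Finset.le_inf' _ _ fun c hc' => ?_)
    · exact (Finset.inf'_le _ (mem_cells.2 hc)).trans_eq (interpMap_skew ..)
    · rw [interpMap_skew]
      exact hf.interp_le_interp (mem_cells.1 hc') hc hst
  refine ⟨g, ⟨(triangularGrid N hN).convex, fun P _ Q _ a b ha hb hab => ?_⟩, ?_, fun v hv => ?_⟩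
  · refine Finset.le_inf' _ _ fun c hc => ?_
    rw [Convex.combo_affine_apply hab]
    gcongr <;> exact Finset.inf'_le _ hc
  · intro T hT
    obtain ⟨i, j, ε, hc, rfl⟩ := (mem_tris_triangularGrid hN).1 hT
    refine ⟨interpMap f i j ε, fun P hP => ?_⟩
    obtain ⟨⟨s, t⟩, rfl⟩ := skew.surjective P
    rw [interpMap_skew, hg hc hP]
  · obtain ⟨i, j, ε, hc, hmem⟩ := exists_isCell_mem_region hN (s := v.1) (t := v.2)
      (by exact_mod_cast hv.1) (by exact_mod_cast hv.2.1) (by exact_mod_cast hv.2.2)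
    rw [gridVertex_apply, hg hc hmem, interp_eq_of_mem_region f hc.1 hmem]

theorem IsCell.exists_combo_mem_region (hN : 0 < N) {i j ε : ℤ} (hc : IsCell N i j ε) {v : ℤ × ℤ}
    (hv : v ∈ newtonTriangle N) : ∃ P ∈ (cellTriangle i j ε).region, ∃ a b : ℝ,
      0 ≤ a ∧ 0 < b ∧ a + b = 1 ∧ a • P + b • gridVertex v ∈ (cellTriangle i j ε).region := by
  have : (0 : ℝ) < N := by exact_mod_cast hN
  obtain ⟨δ, hδ, hδN⟩ : ∃ δ : ℝ, 0 < δ ∧ 3 * N * δ + δ = 1 :=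
    ⟨1 / (3 * N + 1), by positivity, by field_simp⟩
  refine ⟨skew (i + ε / 3, j + ε / 3), ?_, 3 * N * δ, δ, by positivity, hδ, hδN, ?_⟩
  · rw [mem_region_cellTriangle hc.1]
    obtain rfl | rfl := hc.1 <;> norm_num
  · simp only [gridVertex_apply, ← map_smul, ← map_add, Prod.smul_mk, Prod.mk_add_mk,
      smul_eq_mul, mem_region_cellTriangle hc.1]
    obtain ⟨hx, hy, hxy⟩ : 0 ≤ N + ε * (v.1 - i) ∧ 0 ≤ N + ε * (v.2 - j) ∧
        ε * (v.1 - i) + ε * (v.2 - j) ≤ N := by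
      obtain ⟨hv₁, hv₂, hv₃⟩ := hv
      obtain ⟨rfl | rfl, hi, hi'⟩ := hc <;> omega
    rify at hx hy hxy
    have hε : (ε : ℝ) * ε = 1 := by obtain rfl | rfl := hc.1 <;> norm_num
    refine ⟨?_, ?_, ?_⟩
    · linear_combination δ * hx - ε * i * hδN - N * δ * hε
    · linear_combination δ * hy - ε * j * hδN - N * δ * hε
    · linear_combination δ * hxy + hδ + (1 + ε * (i + j)) * hδN + 2 * N * δ * hε

theorem isHive_of_concaveOn (hN : 0 < N) {g : Pt → ℝ} {d : ℝ}
    (hg : ConcaveOn ℝ (triangularGrid N hN).region g)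
    (haff : ∀ T ∈ (triangularGrid N hN).tris, AffineOn g T.region)
    (hf : ∀ v ∈ newtonTriangle N, f v = g (gridVertex v) + d) : IsHive N f := by
  intro i j ε hc v hv
  have hT := (mem_tris_triangularGrid hN).2 ⟨i, j, ε, hc, rfl⟩
  obtain ⟨φ, hφ⟩ := haff _ hT
  have hcorner {w : ℤ × ℤ} (hw : w ∈ newtonTriangle N)
      (hmem : gridVertex w ∈ (cellTriangle i j ε).region) : f w = φ (gridVertex w) + d := by
    rw [hf w hw, hφ _ hmem]
  have hmem := fun w => (gridVertex_mem_region_cellTriangle (i := i) (j := j) (v := w) hc.1).2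
  have hinterp : interp f i j ε v.1 v.2 = φ (gridVertex v) + d := by
    rw [gridVertex_apply, ← interp_affineMap φ hc.1, interp, interp,
      hcorner hc.corner_mem (hmem _ (by tauto)), hcorner hc.fst_corner_mem (hmem _ (by tauto)),
      hcorner hc.snd_corner_mem (hmem _ (by tauto))]
    ring
  rw [hinterp, hf v hv, add_le_add_iff_right]
  obtain ⟨P, hP, a, δ, ha, hδ, hab, hPv⟩ := hc.exists_combo_mem_region hN hv
  exact le_affineMap_of_concaveOn hg (Set.mem_biUnion hT hP)
    (gridVertex_mem_region_triangularGrid hN hv) ha hδ hab (hφ _ hP) (hφ _ hPv)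

theorem IsHive.exists_isConcaveCocirculation (hN : 0 < N) (hf : IsHive N f) :
    ∃ h, IsConcaveCocirculation (triangularGrid N hN) h ∧ IsPotential N f h := by
  obtain ⟨g, hg, haff, hval⟩ := hf.exists_concaveOn hN
  refine ⟨fun e => g e.2 - g e.1, ⟨fun T _ => ?_, g, hg, haff, fun _ _ => rfl⟩,
    fun l v hv hv' => ?_⟩
  · simp only [GridTriangle.e0, GridTriangle.e1, GridTriangle.e2]
    ring
  · simp only [gridEdge, hval _ hv, hval _ hv']

end hive

theorem eq_of_forall_succ_eq {α : Type*} {x : ℤ → α} {M n : ℤ}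
    (hx : ∀ m, 0 ≤ m → m < M → x (m + 1) = x m) (hn : 0 ≤ n) (hnM : n ≤ M) : x n = x 0 := by
  induction n, hn using Int.leInduction with
  | base => rfl
  | succ m hm ih => rw [hx m hm (by lia), ih (by lia)]

section potential

variable {N : ℤ} {f f' : ℤ × ℤ → ℝ} {h h' : Ed → ℝ}

theorem IsPotential.sub_eq_sub_of_row (hf : IsPotential N f h) (hf' : IsPotential N f' h') {s : ℤ}
    (hs : 0 ≤ s) (hsN : s ≤ N)
    (hrow : ∀ m, 0 ≤ m → m < N → h (gridEdge 1 (m, 0)) = h' (gridEdge 1 (m, 0))) :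
    f (s, 0) - f' (s, 0) = f (0, 0) - f' (0, 0) := by
  refine eq_of_forall_succ_eq (x := fun m => f (m, 0) - f' (m, 0)) (fun m hm hmN => ?_) hs hsN
  have hv : (m, 0) ∈ newtonTriangle N := ⟨hm, le_rfl, by lia⟩
  have hv' : (m, 0) + conormal 1 ∈ newtonTriangle N :=
    ⟨show 0 ≤ m + 1 by lia, le_rfl, show m + 1 + 0 ≤ N by lia⟩
  have hedge := hrow m hm hmN
  rw [hf 1 _ hv hv', hf' 1 _ hv hv'] at hedge
  simp only [conormal, Matrix.cons_val, Prod.mk_add_mk, add_zero] at hedge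
  linarith

theorem IsPotential.sub_eq_sub_of_column (hf : IsPotential N f h) (hf' : IsPotential N f' h')
    {s t : ℤ} (hst : (s, t) ∈ newtonTriangle N)
    (hcol : ∀ m, 0 < m → s + m ≤ N → h (gridEdge 0 (s, m)) = h' (gridEdge 0 (s, m))) :
    f (s, t) - f' (s, t) = f (s, 0) - f' (s, 0) := by
  obtain ⟨hs, ht, hst⟩ := hst
  refine eq_of_forall_succ_eq (x := fun m => f (s, m) - f' (s, m)) (M := N - s)
    (fun m hm hmN => ?_) ht (by lia)
  have hv : (s, m + 1) ∈ newtonTriangle N := ⟨hs, by lia, by lia⟩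
  have hv' : (s, m + 1) + conormal 0 ∈ newtonTriangle N :=
    ⟨show 0 ≤ s + 0 by lia, show 0 ≤ m + 1 + -1 by lia, show s + 0 + (m + 1 + -1) ≤ N by lia⟩
  have hedge := hcol (m + 1) (by lia) (by lia)
  rw [hf 0 _ hv hv', hf' 0 _ hv hv'] at hedge
  simp only [conormal, Matrix.cons_val, Prod.mk_add_mk, add_zero, add_neg_cancel_right] at hedge
  linarith

theorem IsPotential.eqOn_newtonTriangle (hf : IsPotential N f h) (hf' : IsPotential N f' h)
    (h₀ : f (0, 0) = f' (0, 0)) : Set.EqOn f f' (newtonTriangle N) := by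
  rintro ⟨s, t⟩ hst
  rw [← sub_eq_zero, hf.sub_eq_sub_of_column hf' hst fun _ _ _ => rfl,
    hf.sub_eq_sub_of_row hf' hst.1 (by linarith [hst.2.1, hst.2.2]) fun _ _ _ => rfl, h₀, sub_self]

/-- The edges of the triangular grid on the two coordinate axes. -/
def axisEdges (N : ℤ) (hN : 0 < N) : Finset Ed :=
  SideEdges (triangularGrid N hN) (gridVertex (0, 0)) (gridVertex (N, 0)) ∪
    SideEdges (triangularGrid N hN) (gridVertex (0, 0)) (gridVertex (0, N))

theorem axisEdges_subset_boundary (hN : 0 < N) :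
    axisEdges N hN ⊆ (triangularGrid N hN).boundary :=
  Finset.union_subset (Finset.filter_subset ..) (Finset.filter_subset ..)

theorem IsPotential.eq_of_axisEdges (hN : 0 < N) (hf : IsPotential N f h)
    (hf' : IsPotential N f' h') (h₀ : f (0, 0) = f' (0, 0))
    (hh : ∀ e ∈ axisEdges N hN, h e = h' e) {v : ℤ × ℤ} (hv : v ∈ newtonTriangle N)
    (hv₀ : v.1 = 0 ∨ v.2 = 0) : f v = f' v := by
  obtain ⟨s, t⟩ := v
  rw [← sub_eq_zero]
  obtain rfl | rfl := hv₀
  · rw [hf.sub_eq_sub_of_column hf' hv, h₀, sub_self]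
    exact fun m hm hmN => hh _ <| Finset.mem_union_right _ <|
      gridEdge_mem_sideEdges_snd hN hm (by lia)
  · rw [hf.sub_eq_sub_of_row hf' hv.1 (by simpa using hv.2.2), h₀, sub_self]
    exact fun m hm hmN => hh _ <| Finset.mem_union_left _ <| gridEdge_mem_sideEdges_fst hN hm hmN

theorem IsPotential.exists_mem_hivePolytope (hN : 0 < N) {b : ℤ × ℤ → ℝ}
    (hfb : f ∈ hivePolytope N b) (hf : IsPotential N f h)
    (hconc : IsConcaveCocirculation (triangularGrid N hN) h')
    (hh : ∀ e ∈ axisEdges N hN, h' e = h e) :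
    ∃ f' ∈ hivePolytope N b, IsPotential N f' h' := by
  obtain ⟨-, g, hg, haff, hh'⟩ := hconc
  let d := f (0, 0) - g (gridVertex (0, 0))
  let f' := (newtonTriangle N).indicator fun v => g (gridVertex v) + d
  have hval : ∀ v ∈ newtonTriangle N, f' v = g (gridVertex v) + d :=
    fun v hv => Set.indicator_of_mem hv _
  have hpot : IsPotential N f' h' := fun l v hv hv' => by
    rw [hh' _ ((gridEdge_mem_edges_triangularGrid hN).2 ⟨hv, hv'⟩), hval _ hv, hval _ hv',
      add_sub_add_right_eq_sub]
    rfl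
  have h₀ : f' (0, 0) = f (0, 0) := by
    rw [hval _ ⟨le_rfl, le_rfl, by lia⟩]
    exact add_sub_cancel _ _
  refine ⟨f', ⟨isHive_of_concaveOn hN hg haff hval, fun v hv hv₀ => ?_, fun v hv => ?_⟩, hpot⟩
  · rw [hpot.eq_of_axisEdges hN hf h₀ hh hv hv₀, hfb.2.1 v hv hv₀]
  · exact Set.indicator_of_notMem hv _

theorem IsPotential.isVertexOf_CC (hN : 0 < N) {b : ℤ × ℤ → ℝ}
    (hfb : f ∈ (hivePolytope N b).extremePoints ℝ) (hf : IsPotential N f h)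
    (hconc : IsConcaveCocirculation (triangularGrid N hN) h) {h₀ : Ed → ℝ}
    (hh₀ : ∀ e ∈ axisEdges N hN, h e = h₀ e) :
    IsVertexOf (triangularGrid N hN) (CC (triangularGrid N hN) (axisEdges N hN) h₀) h := by
  refine ⟨⟨hconc, hh₀⟩, fun h₁ hmem₁ h₂ hmem₂ hmid => ?_⟩
  obtain ⟨f₁, hf₁b, hf₁⟩ := hf.exists_mem_hivePolytope hN hfb.1 hmem₁.1
    fun e he => (hmem₁.2 e he).trans (hh₀ e he).symm
  obtain ⟨f₂, hf₂b, hf₂⟩ := hf.exists_mem_hivePolytope hN hfb.1 hmem₂.1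
    fun e he => (hmem₂.2 e he).trans (hh₀ e he).symm
  have horigin {f' : ℤ × ℤ → ℝ} (hf' : f' ∈ hivePolytope N b) : f' (0, 0) = b (0, 0) :=
    hf'.2.1 _ ⟨le_rfl, le_rfl, by lia⟩ (Or.inl rfl)
  have hpot : IsPotential N ((1 / 2 : ℝ) • f₁ + (1 / 2 : ℝ) • f₂) h := fun l v hv hv' => by
    rw [hmid _ ((gridEdge_mem_edges_triangularGrid hN).2 ⟨hv, hv'⟩), hf₁ l v hv hv',
      hf₂ l v hv hv']
    simp only [Pi.add_apply, Pi.smul_apply, smul_eq_mul]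
    ring
  have hcombo : (1 / 2 : ℝ) • f₁ + (1 / 2 : ℝ) • f₂ = f := by
    funext v
    by_cases hv : v ∈ newtonTriangle N
    · refine hpot.eqOn_newtonTriangle hf ?_ hv
      simp only [Pi.add_apply, Pi.smul_apply, smul_eq_mul, horigin hf₁b, horigin hf₂b,
        horigin hfb.1]
      ring
    · simp [hf₁b.2.2 v hv, hf₂b.2.2 v hv, hfb.1.2.2 v hv]
  obtain ⟨rfl, rfl⟩ := (mem_extremePoints.1 hfb).2 f₁ hf₁b f₂ hf₂b
    ⟨1 / 2, 1 / 2, by norm_num, by norm_num, by norm_num, hcombo⟩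
  intro e he
  obtain ⟨l, v, ⟨hv, hv'⟩, rfl⟩ := (mem_edges_triangularGrid hN).1 he
  rw [hf₁ l v hv hv', hf₂ l v hv hv']

end potential

theorem IsPotential.exists_int_eq_of_mem_boundary {N : ℤ} (hN : 0 < N) {f : ℤ × ℤ → ℝ}
    {h : Ed → ℝ} (hf : IsPotential N f h)
    (hint : ∀ i, ∀ v ∈ newtonTriangle N, v + conormal i ∈ newtonTriangle N →
      pair (ray i) v = side N i → ∃ z : ℤ, f v - f (v + conormal i) = z) {e : Ed}
    (he : e ∈ (triangularGrid N hN).boundary) : ∃ z : ℤ, h e = z := by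
  obtain ⟨i, v, ⟨hv, hv'⟩, rfl⟩ := (mem_edges_triangularGrid hN).1 (Finset.mem_filter.1 he).1
  obtain ⟨z, hz⟩ := hint i v hv hv' ((gridEdge_mem_boundary_triangularGrid hN).1 he).2
  exact ⟨-z, by rw [hf i v hv hv', ← neg_sub, hz, Int.cast_neg]⟩

/-- Theorem 3.  There is an absolute constant C such that for every
k ≥ 1 there are a 3-side grid G of size at most C·k (for a 3-side grid the number of
boundary edges is three times its size) and an integer function h₀ on the edges of two
of the sides of G such that C(G,h₀) has a vertex h with some entry of denominator
exactly k, while h is integer-valued on all boundary edges. -/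
theorem stmt3 :
    ∃ Cconst : ℕ, 0 < Cconst ∧ ∀ k : ℕ, 0 < k →
      ∃ (G : ConvexGrid) (a b c : Pt) (h₀ : Ed → ℤ) (h : Ed → ℝ),
        ¬ Collinear ℝ ({a, b, c} : Set Pt) ∧
        G.region = convexHull ℝ ({a, b, c} : Set Pt) ∧
        G.boundary.card ≤ 3 * (Cconst * k) ∧
        IsVertexOf G (CC G (↑(SideEdges G a b ∪ SideEdges G a c)) fun e => (h₀ e : ℝ)) h ∧
        (∃ e ∈ G.edges, ∃ q : ℚ, h e = (q : ℝ) ∧ q.den = k) ∧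
        ∀ e ∈ G.boundary, ∃ z : ℤ, h e = (z : ℝ) := by
  refine ⟨9, by norm_num, fun k hk => ?_⟩
  have hN : (0 : ℤ) < 9 * k := by positivity
  obtain ⟨b, f, hfb, ⟨i, v, hv, hv', hdiff⟩, hint⟩ := exists_mem_extremePoints_hivePolytope hk
  obtain ⟨h, hconc, hf⟩ := hfb.1.1.exists_isConcaveCocirculation hN
  have hbdry (e) (he : e ∈ (triangularGrid (9 * k) hN).boundary) :=
    hf.exists_int_eq_of_mem_boundary hN hint he
  refine ⟨triangularGrid (9 * k) hN, gridVertex (0, 0), gridVertex (9 * k, 0),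
    gridVertex (0, 9 * k), fun e => ⌊h e⌋, h, not_collinear_gridVertex hN.ne',
    region_triangularGrid hN, (card_boundary_triangularGrid_le hN).trans (by lia), ?_,
    ⟨gridEdge i v, (gridEdge_mem_edges_triangularGrid hN).2 ⟨hv, hv'⟩, -(k : ℚ)⁻¹, ?_, ?_⟩, hbdry⟩
  · refine hf.isVertexOf_CC hN hfb hconc fun e he => ?_
    obtain ⟨z, hz⟩ := hbdry e (axisEdges_subset_boundary hN he)
    simp only [hz, Int.floor_intCast]
  · have : f v - f (v + conormal i) = (k : ℝ)⁻¹ := eq_inv_of_mul_eq_one_right hdiff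
    rw [hf i v hv hv', ← neg_sub, this]
    push_cast
    rfl
  · rw [Rat.neg_den, Rat.inv_natCast_den_of_pos hk]

end
end

section
/- A cocirculation h in a convex triangular grid G is concave if and only if every little rhombus of G satisfies the rhombus condition: h(e) ≥ h(e') whenever e and e' are the non-adjacent (parallel) edges of a pair of parallel boundary edges of the rhombus and e enters an obtuse vertex of the rhombus. -/
open scoped BigOperators

attribute [local instance] Classical.propDecidable

noncomputable section

/-- The rhombus condition: for every little rhombus (two little triangles T ≠ T'
sharing a common edge e₀, whose two obtuse vertices are the endpoints of e₀), and every
pair of distinct parallel boundary edges e (of T) and e' (of T') of the rhombus with e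
entering an obtuse vertex, one has h(e) ≥ h(e'). -/
def RhombusCondition (G : ConvexGrid) (h : Ed → ℝ) : Prop :=
  ∀ T ∈ G.tris, ∀ T' ∈ G.tris, T ≠ T' →
    ∀ e₀ ∈ T.edgeFinset ∩ T'.edgeFinset,
      ∀ e ∈ T.edgeFinset, ∀ e' ∈ T'.edgeFinset, e ≠ e' →
        e.2 - e.1 = e'.2 - e'.1 → (e.2 = e₀.1 ∨ e.2 = e₀.2) → h e' ≤ h e

/-!
A cocirculation prescribes on every little triangle an affine function up to an additive constant.
Fix a point `x₀` in general position and add the triangles in the order of their distance from `x₀`: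
the edges of a new triangle that separate it from `x₀` lead to triangles already present, and there
are at most two of them, with a common end `v`. The constant is determined by the value at `v`, and
if there are two such edges, both prescribe the same value, since the hexagon around `v` has already
been filled in. So the affine functions `Φ T` can be chosen to agree along all common edges.

Let `w` be the vertex of a triangle `T` opposite to an edge shared with `T'`. For parallel edges `e`
of `T` and `e'` of `T'` as in the rhombus condition, `h e - h e' = Φ T' w - Φ T w`; so the condition
says that the `Φ T` bend concavely across every common edge. If it holds, walking from a triangle
`S` towards a point `x` never increases the value at `x`, so that `Φ T ≤ Φ S` on `T` for all `S`.
Hence `min_S Φ S` is a concave function that equals `Φ T` on `T`.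
-/

open Filter Topology

lemma eventually_lineMap_pos {a b : ℝ} (ha : 0 ≤ a) (hb : a = 0 → 0 < b) :
    ∀ᶠ t in 𝓝[>] (0 : ℝ), 0 < AffineMap.lineMap a b t := by
  rcases ha.eq_or_lt with rfl | ha
  · filter_upwards [self_mem_nhdsWithin] with t ht
    simpa [AffineMap.lineMap_apply] using mul_pos ht (hb rfl)
  · have hcont : Tendsto (AffineMap.lineMap a b : ℝ → ℝ) (𝓝 0) (𝓝 a) := by
      simpa using (AffineMap.lineMap_continuous (p := a) (q := b) (R := ℝ)).tendsto 0
    exact (hcont.eventually_const_lt ha).filter_mono nhdsWithin_le_nhds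

lemma sum_eq_add_add_of_ne {i j k : Fin 3} (hij : i ≠ j) (hik : i ≠ k) (hjk : j ≠ k)
    {M : Type*} [AddCommMonoid M] (f : Fin 3 → M) : ∑ m, f m = f i + f j + f k := by
  have huniv : (Finset.univ : Finset (Fin 3)) = {i, j, k} := by
    ext m
    simp only [Finset.mem_univ, Finset.mem_insert, Finset.mem_singleton, true_iff]
    omega
  rw [huniv, Finset.sum_insert (by simp [hij, hik]), Finset.sum_pair hjk, add_assoc]

/-! ### Hexagonal coordinates -/

/-- The linear form on the plane vanishing on `ξ_l` and taking the values `1` on `ξ_{l+1}` and `-1`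
on `ξ_{l+2}`; up to scale it is the cross product with `ξ_l`. -/
def hexCoord (l : Fin 3) : Pt →ₗ[ℝ] ℝ :=
  (2 / √3) • ((xiv l).1 • LinearMap.snd ℝ ℝ ℝ - (xiv l).2 • LinearMap.fst ℝ ℝ ℝ)

lemma hexCoord_apply (l : Fin 3) (p : Pt) :
    hexCoord l p = 2 / √3 * ((xiv l).1 * p.2 - (xiv l).2 * p.1) := by
  simp [hexCoord]

lemma hexCoord_xiv_self (l : Fin 3) : hexCoord l (xiv l) = 0 := by
  rw [hexCoord_apply]
  ring

lemma hexCoord_xiv_add_one (l : Fin 3) : hexCoord l (xiv (l + 1)) = 1 := by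
  fin_cases l <;> grind [hexCoord_apply, xiv]

lemma hexCoord_xiv_add_two (l : Fin 3) : hexCoord l (xiv (l + 2)) = -1 := by
  fin_cases l <;> grind [hexCoord_apply, xiv]

lemma sum_hexCoord (p : Pt) : ∑ l, hexCoord l p = 0 := by
  simp only [Fin.sum_univ_three, hexCoord_apply, xiv]
  ring

lemma xiv_injective : Function.Injective xiv := by
  intro l m h
  have hlm : hexCoord l (xiv m) = 0 := h ▸ hexCoord_xiv_self l
  obtain rfl | rfl | rfl : m = l ∨ m = l + 1 ∨ m = l + 2 := by omega
  · rfl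
  · simp [hexCoord_xiv_add_one] at hlm
  · simp [hexCoord_xiv_add_two] at hlm

lemma exists_int_eq_hexCoord_of_isLatticeVec {p : Pt} (hp : IsLatticeVec p) (l : Fin 3) :
    ∃ k : ℤ, hexCoord l p = k := by
  obtain ⟨m, n, rfl⟩ := hp
  have h₁ := hexCoord_xiv_add_one l
  have h₂ := hexCoord_xiv_add_two l
  simp only [map_add, map_smul, smul_eq_mul]
  obtain rfl | rfl | rfl : l = 0 ∨ l = 1 ∨ l = 2 := by omega
  · exact ⟨n, by simp_all [hexCoord_xiv_self]⟩
  · exact ⟨-m, by simp_all [hexCoord_xiv_self]⟩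
  · exact ⟨m - n, by simp_all [sub_eq_add_neg]⟩

namespace GridTriangle

variable {T T' S : GridTriangle} {i j k l m : Fin 3} {x x₀ : Pt} {h : Ed → ℝ} {φ φ' : Pt →ᵃ[ℝ] ℝ}
  {Φ : GridTriangle → Pt →ᵃ[ℝ] ℝ} {𝒯 : Finset GridTriangle}

/-! ### Barycentric coordinates -/

/-- The orientation of a little triangle as a sign: `1` for upward, `-1` for downward. -/
def sign (T : GridTriangle) : ℝ := if T.up then 1 else -1

lemma sign_mul_self (T : GridTriangle) : T.sign * T.sign = 1 := by
  rcases hT : T.up <;> simp [sign, hT]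

/-- The vertices of a little triangle, labelled so that vertex `l` is opposite to the edge of
direction `ξ_l`. -/
def vertex (T : GridTriangle) : Fin 3 → Pt :=
  if T.up then ![T.v2, T.v0, T.v1] else ![T.v2, T.v1, T.v0]

/-- The edge of direction `ξ_l` of a little triangle. -/
def edge (T : GridTriangle) (l : Fin 3) : Ed :=
  if T.up then (T.vertex (l + 1), T.vertex (l + 2)) else (T.vertex (l + 2), T.vertex (l + 1))

lemma mem_edgeFinset {e : Ed} : e ∈ T.edgeFinset ↔ ∃ l, T.edge l = e := by
  rcases hT : T.up <;>
    simp [edgeFinset, edge, vertex, hT, e0, e1, e2, Fin.exists_fin_succ, eq_comm, or_comm]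

lemma edge_mem_edgeFinset (T : GridTriangle) (l : Fin 3) : T.edge l ∈ T.edgeFinset :=
  mem_edgeFinset.2 ⟨l, rfl⟩

lemma sum_edge (h : Ed → ℝ) (T : GridTriangle) :
    ∑ l, h (T.edge l) = h T.e0 + h T.e1 + h T.e2 := by
  rcases hT : T.up
  · simp [edge, vertex, hT, e0, e1, e2, Fin.sum_univ_three, add_right_comm]
  · simp [edge, vertex, hT, e0, e1, e2, Fin.sum_univ_three]

lemma vertex_sub_vertex (T : GridTriangle) (l : Fin 3) :
    T.vertex (l + 2) - T.vertex (l + 1) = T.sign • xiv l := by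
  rcases hT : T.up <;> fin_cases l <;> ext <;>
    simp [vertex, sign, hT, v0, v1, v2, xiv] <;> ring

lemma edge_snd_sub_fst (T : GridTriangle) (l : Fin 3) :
    (T.edge l).2 - (T.edge l).1 = xiv l := by
  have h := T.vertex_sub_vertex l
  rcases hT : T.up <;> simp only [edge, sign, hT] at h ⊢
  · simpa using congrArg Neg.neg h
  · simpa using h

lemma eq_of_vertex_eq (hup : T.up = T'.up) (h : T.vertex l = T'.vertex l) : T = T' := by
  rcases T with ⟨p, u⟩
  rcases T' with ⟨q, u'⟩
  obtain rfl : u = u' := hup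
  cases u <;> fin_cases l <;> simpa [vertex, v0, v1, v2, add_assoc] using h

lemma eq_of_edge_eq (hup : T.up = T'.up) (h : T.edge l = T'.edge l) : T = T' := by
  refine eq_of_vertex_eq (l := l + 1) hup ?_
  rcases hT : T.up <;> simp_all [edge]

/-- The barycentric coordinate of the plane belonging to vertex `l` of a little triangle. -/
def bary (T : GridTriangle) (l : Fin 3) : Pt →ᵃ[ℝ] ℝ :=
  T.sign • ((hexCoord l).toAffineMap - AffineMap.const ℝ Pt (hexCoord l (T.vertex (l + 1))))

lemma bary_apply (T : GridTriangle) (l : Fin 3) (x : Pt) :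
    T.bary l x = T.sign * hexCoord l (x - T.vertex (l + 1)) := by
  simp [bary]

lemma sign_mul_bary_sub (T : GridTriangle) (l : Fin 3) (x y : Pt) :
    T.sign * (T.bary l x - T.bary l y) = hexCoord l (x - y) := by
  simp only [bary_apply, map_sub]
  linear_combination (hexCoord l x - hexCoord l y) * T.sign_mul_self

lemma bary_vertex_self (T : GridTriangle) (l : Fin 3) : T.bary l (T.vertex l) = 1 := by
  have h := congrArg (hexCoord l) (T.vertex_sub_vertex (l + 2))
  simp only [add_assoc, Fin.reduceAdd, add_zero, map_smul, hexCoord_xiv_add_two, map_sub,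
    smul_eq_mul] at h
  rw [bary_apply, map_sub]
  linear_combination -T.sign * h + T.sign_mul_self

lemma bary_vertex_of_ne (T : GridTriangle) (h : l ≠ m) : T.bary l (T.vertex m) = 0 := by
  obtain rfl | rfl : m = l + 1 ∨ m = l + 2 := by omega
  · rw [bary_apply, sub_self, map_zero, mul_zero]
  · rw [bary_apply, vertex_sub_vertex, map_smul, hexCoord_xiv_self, smul_zero, mul_zero]

lemma sum_bary (T : GridTriangle) (x : Pt) : ∑ l, T.bary l x = 1 := by
  have hx := sum_hexCoord (x - T.vertex 0)
  simp only [← T.sign_mul_bary_sub, ← Finset.mul_sum, Finset.sum_sub_distrib] at hx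
  rw [Fin.sum_univ_three fun l => T.bary l (T.vertex 0), bary_vertex_self,
    bary_vertex_of_ne T (by simp), bary_vertex_of_ne T (by simp)] at hx
  linear_combination T.sign * hx - (∑ l, T.bary l x - 1) * T.sign_mul_self

lemma sum_bary_smul_vertex (T : GridTriangle) (x : Pt) : ∑ l, T.bary l x • T.vertex l = x := by
  rcases hT : T.up <;> ext <;>
    simp [bary_apply, Fin.sum_univ_three, sign, hT, hexCoord_apply, vertex, xiv, v0, v1, v2] <;>
    grind

lemma bary_edge_self (T : GridTriangle) (l : Fin 3) :
    T.bary l (T.edge l).1 = 0 ∧ T.bary l (T.edge l).2 = 0 := by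
  rcases hT : T.up <;> simp [edge, hT, bary_vertex_of_ne]

lemma bary_edge_fst_add_snd (T : GridTriangle) (h : m ≠ l) :
    T.bary l (T.edge m).1 + T.bary l (T.edge m).2 = 1 := by
  obtain rfl | rfl : l = m + 1 ∨ l = m + 2 := by omega
  all_goals
    rcases hT : T.up <;> simp [edge, hT, bary_vertex_self, bary_vertex_of_ne]

lemma exists_edge_snd_eq_edge_fst (T : GridTriangle) (l : Fin 3) :
    ∃ m ≠ l, (T.edge m).2 = (T.edge l).1 := by
  rcases hT : T.up
  · exact ⟨l + 1, by simp, by simp [edge, hT, add_assoc]⟩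
  · exact ⟨l + 2, by simp, by simp [edge, hT, add_assoc]⟩

lemma mem_region : x ∈ T.region ↔ ∀ l, 0 ≤ T.bary l x := by
  have hrange : ({T.v0, T.v1, T.v2} : Set Pt) = Set.range T.vertex := by
    ext y
    rcases hT : T.up <;> simp only [vertex, hT, Set.mem_insert_iff, Set.mem_singleton_iff,
      Set.mem_range, Fin.exists_fin_succ] <;> simp <;> tauto
  rw [region, hrange]
  constructor
  · intro hx l
    refine convexHull_min ?_ ((convex_Ici (0 : ℝ)).affine_preimage (T.bary l)) hx
    rintro _ ⟨m, rfl⟩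
    obtain rfl | h := eq_or_ne l m
    · simp [bary_vertex_self]
    · simp [bary_vertex_of_ne T h]
  · intro hx
    rw [← T.sum_bary_smul_vertex x]
    exact (convex_convexHull ℝ _).sum_mem (fun l _ => hx l) (T.sum_bary x)
      fun l _ => subset_convexHull ℝ _ ⟨l, rfl⟩

lemma vertex_mem_region (T : GridTriangle) (l : Fin 3) : T.vertex l ∈ T.region := by
  rw [mem_region]
  intro m
  obtain rfl | h := eq_or_ne m l
  · simp [bary_vertex_self]
  · simp [bary_vertex_of_ne T h]

lemma edge_mem_region (T : GridTriangle) (l : Fin 3) :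
    (T.edge l).1 ∈ T.region ∧ (T.edge l).2 ∈ T.region := by
  rcases hT : T.up <;> simp [edge, hT, vertex_mem_region]

lemma bary_le_one (hx : x ∈ T.region) (l : Fin 3) : T.bary l x ≤ 1 :=
  (Finset.single_le_sum (fun m _ => mem_region.1 hx m) (Finset.mem_univ l)).trans_eq (T.sum_bary x)

/-- The centroid of a little triangle, its point with all barycentric coordinates `1 / 3`. -/
def centroid (T : GridTriangle) : Pt :=
  Finset.univ.centroid ℝ T.vertex

lemma bary_centroid (T : GridTriangle) (l : Fin 3) : T.bary l T.centroid = 1 / 3 := by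
  have hw : ∑ m : Fin 3, Finset.univ.centroidWeights ℝ m = (1 : ℝ) := by simp
  rw [centroid, Finset.centroid_def, Finset.map_affineCombination _ _ _ hw,
    Finset.affineCombination_eq_linear_combination _ _ _ hw, Finset.sum_eq_single l]
  · simp [bary_vertex_self]
  · intro m _ hm
    simp [bary_vertex_of_ne T hm.symm]
  · simp

lemma centroid_mem_region (T : GridTriangle) : T.centroid ∈ T.region := by
  simp [mem_region, bary_centroid]

/-! ### Neighbouring triangles -/

/-- The little triangle sharing with `T` the edge opposite to vertex `l`. -/
def flip (T : GridTriangle) (l : Fin 3) : GridTriangle where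
  base := T.base + T.sign • ![0, -xiv 2, xiv 1] l
  up := !T.up

lemma flip_flip (T : GridTriangle) (l : Fin 3) : (T.flip l).flip l = T := by
  rcases T with ⟨p, _ | _⟩ <;> simp [flip, sign]

lemma flip_flip_flip (T : GridTriangle) (hij : i ≠ j) (hik : i ≠ k) (hjk : j ≠ k) :
    ((T.flip i).flip k).flip j = ((T.flip j).flip k).flip i := by
  rcases T with ⟨p, _ | _⟩ <;> fin_cases i <;> fin_cases j <;> fin_cases k <;>
    simp [flip, sign, xiv] at hij hik hjk ⊢ <;> grind

lemma flip_ne (T : GridTriangle) (l : Fin 3) : T.flip l ≠ T := by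
  intro h
  simpa [flip] using congrArg up h

lemma sign_flip (T : GridTriangle) (l : Fin 3) : (T.flip l).sign = -T.sign := by
  rcases hT : T.up <;> simp [sign, flip, hT]

lemma vertex_flip_add_one (T : GridTriangle) (l : Fin 3) :
    (T.flip l).vertex (l + 1) = T.vertex (l + 2) := by
  rcases hT : T.up <;> fin_cases l <;> ext <;>
    simp [flip, vertex, sign, hT, v0, v1, v2, xiv] <;> ring

lemma vertex_flip_add_two (T : GridTriangle) (l : Fin 3) :
    (T.flip l).vertex (l + 2) = T.vertex (l + 1) := by
  rw [← vertex_flip_add_one, flip_flip]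

lemma edge_flip_self (T : GridTriangle) (l : Fin 3) : (T.flip l).edge l = T.edge l := by
  rw [edge, edge, vertex_flip_add_one, vertex_flip_add_two]
  cases hT : T.up <;> simp [flip, hT]

lemma exists_eq_flip_of_mem_edgeFinset {e : Ed} (hne : T ≠ T') (he : e ∈ T.edgeFinset)
    (he' : e ∈ T'.edgeFinset) : ∃ l, T' = T.flip l ∧ e = T.edge l := by
  obtain ⟨l, rfl⟩ := mem_edgeFinset.1 he
  obtain ⟨l', hl'⟩ := mem_edgeFinset.1 he'
  obtain rfl : l' = l := xiv_injective <| by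
    rw [← edge_snd_sub_fst T', ← edge_snd_sub_fst T, hl']
  have hup : T'.up = (T.flip l').up := by
    have : T.up ≠ T'.up := fun hup => hne (eq_of_edge_eq hup hl'.symm)
    simpa [flip] using Bool.eq_not_of_ne this.symm
  exact ⟨l', eq_of_edge_eq hup (hl'.trans (T.edge_flip_self l').symm), rfl⟩

lemma bary_flip_self (T : GridTriangle) (l : Fin 3) (x : Pt) :
    (T.flip l).bary l x = -T.bary l x := by
  have h := bary_vertex_of_ne T (l := l) (m := l + 2) (by simp)
  simp only [bary_apply, map_sub, sign_flip, vertex_flip_add_one] at h ⊢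
  linear_combination h

lemma bary_flip_of_ne (T : GridTriangle) (h : m ≠ l) (x : Pt) :
    (T.flip l).bary m x = 1 - T.bary m x := by
  have hone : (T.flip l).bary (l + 1) x = 1 - T.bary (l + 1) x := by
    have hv := T.bary_vertex_self (l + 1)
    simp only [bary_apply, map_sub, sign_flip, add_assoc, Fin.reduceAdd, vertex_flip_add_two]
      at hv ⊢
    linear_combination hv
  obtain rfl | rfl : m = l + 1 ∨ m = l + 2 := by omega
  · exact hone
  · have hne : l ≠ l + 1 ∧ l ≠ l + 2 ∧ l + 1 ≠ l + 2 := by simp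
    have hsum := T.sum_bary x
    have hsum' := (T.flip l).sum_bary x
    rw [sum_eq_add_add_of_ne hne.1 hne.2.1 hne.2.2] at hsum hsum'
    linear_combination hsum + hsum' - T.bary_flip_self l x - hone

lemma edge_flip_ne (T : GridTriangle) (h : m ≠ l) : T.edge m ≠ (T.flip l).edge m := by
  intro heq
  have hsum := (T.flip l).bary_edge_fst_add_snd h
  rw [← heq, bary_flip_self, bary_flip_self] at hsum
  linarith [T.bary_edge_fst_add_snd h]

lemma vertex_mem_region_flip (T : GridTriangle) (h : m ≠ l) : T.vertex m ∈ (T.flip l).region := by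
  rw [mem_region]
  intro n
  obtain rfl | hn := eq_or_ne n l
  · rw [bary_flip_self, bary_vertex_of_ne T h.symm, neg_zero]
  · rw [bary_flip_of_ne T hn]
    exact sub_nonneg.2 (bary_le_one (T.vertex_mem_region m) n)

lemma bary_vertex_flip_self (T : GridTriangle) (l : Fin 3) :
    T.bary l ((T.flip l).vertex l) = -1 := by
  rw [← neg_eq_iff_eq_neg, ← bary_flip_self, bary_vertex_self]

lemma bary_vertex_flip_of_ne (T : GridTriangle) (h : m ≠ l) :
    T.bary m ((T.flip l).vertex l) = 1 := by
  have hm := bary_vertex_of_ne (T.flip l) h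
  rw [bary_flip_of_ne T h] at hm
  linarith

/-- The centre of the little rhombus formed by `T` and `T.flip l`. -/
def rhombusCenter (T : GridTriangle) (l : Fin 3) : Pt :=
  midpoint ℝ (T.vertex l) ((T.flip l).vertex l)

lemma bary_rhombusCenter_self (T : GridTriangle) (l : Fin 3) :
    T.bary l (T.rhombusCenter l) = 0 := by
  rw [rhombusCenter, AffineMap.map_midpoint, bary_vertex_self, bary_vertex_flip_self,
    midpoint_self_neg]

lemma bary_rhombusCenter_of_ne (T : GridTriangle) (h : m ≠ l) :
    T.bary m (T.rhombusCenter l) = 1 / 2 := by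
  rw [rhombusCenter, AffineMap.map_midpoint, bary_vertex_of_ne T h, bary_vertex_flip_of_ne T h,
    midpoint_eq_smul_add]
  norm_num

lemma rhombusCenter_mem_region (T : GridTriangle) (l : Fin 3) : T.rhombusCenter l ∈ T.region := by
  rw [mem_region]
  intro m
  obtain rfl | h := eq_or_ne m l
  · exact (T.bary_rhombusCenter_self m).ge
  · rw [bary_rhombusCenter_of_ne T h]
    norm_num

/-- Up to scale and shift, the squared distance of `x` from the centroid of `T`. -/
def baryNormSq (T : GridTriangle) (x : Pt) : ℝ :=
  ∑ l, T.bary l x ^ 2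

lemma baryNormSq_flip (T : GridTriangle) (l : Fin 3) (x : Pt) :
    (T.flip l).baryNormSq x = T.baryNormSq x + 2 * T.bary l x := by
  have hsum := T.sum_bary x
  have hne : l ≠ l + 1 ∧ l ≠ l + 2 ∧ l + 1 ≠ l + 2 := by simp
  rw [sum_eq_add_add_of_ne hne.1 hne.2.1 hne.2.2] at hsum
  rw [baryNormSq, baryNormSq, sum_eq_add_add_of_ne hne.1 hne.2.1 hne.2.2,
    sum_eq_add_add_of_ne hne.1 hne.2.1 hne.2.2, bary_flip_self, bary_flip_of_ne T hne.1.symm,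
    bary_flip_of_ne T hne.2.1.symm]
  linear_combination -2 * hsum

/-! ### Triangles of one lattice -/

/-- Two little triangles belong to the same triangular lattice: their signed barycentric
coordinates, which have the same linear parts, differ by integers. -/
def IsAligned (T T' : GridTriangle) : Prop :=
  ∀ l x, ∃ k : ℤ, T.sign * T.bary l x - T'.sign * T'.bary l x = k

lemma exists_int_eq_sign (T : GridTriangle) : ∃ k : ℤ, T.sign = k := by
  rcases hT : T.up
  · exact ⟨-1, by simp [sign, hT]⟩
  · exact ⟨1, by simp [sign, hT]⟩

lemma exists_vertex_eq_base (T : GridTriangle) : ∃ m, T.vertex m = T.base := by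
  rcases hT : T.up
  · exact ⟨2, by simp [vertex, hT, v0]⟩
  · exact ⟨1, by simp [vertex, hT, v0]⟩

lemma exists_int_eq_bary_base (T : GridTriangle) (l : Fin 3) : ∃ k : ℤ, T.bary l T.base = k := by
  obtain ⟨m, hm⟩ := T.exists_vertex_eq_base
  rw [← hm]
  obtain rfl | h := eq_or_ne l m
  · exact ⟨1, by simp [bary_vertex_self]⟩
  · exact ⟨0, by simp [bary_vertex_of_ne T h]⟩

lemma isAligned_of_isLatticeVec (h : IsLatticeVec (T.base - T'.base)) : IsAligned T T' := by
  intro l x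
  obtain ⟨k, hk⟩ := exists_int_eq_hexCoord_of_isLatticeVec h l
  obtain ⟨s, hs⟩ := T.exists_int_eq_sign
  obtain ⟨s', hs'⟩ := T'.exists_int_eq_sign
  obtain ⟨b, hb⟩ := T.exists_int_eq_bary_base l
  obtain ⟨b', hb'⟩ := T'.exists_int_eq_bary_base l
  refine ⟨s * b - s' * b' - k, ?_⟩
  have hx := T.sign_mul_bary_sub l x T.base
  have hx' := T'.sign_mul_bary_sub l x T'.base
  push_cast
  rw [← hk, ← hs, ← hs', ← hb, ← hb']
  rw [map_sub] at hx hx' ⊢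
  linear_combination hx - hx'

lemma IsAligned.flip_left (h : IsAligned T T') (m : Fin 3) : IsAligned (T.flip m) T' := by
  intro l x
  obtain ⟨k, hk⟩ := h l x
  obtain rfl | hl := eq_or_ne l m
  · exact ⟨k, by rw [sign_flip, bary_flip_self, ← hk]; ring⟩
  · obtain ⟨s, hs⟩ := T.exists_int_eq_sign
    exact ⟨k - s, by rw [sign_flip, bary_flip_of_ne T hl]; push_cast; rw [← hk, ← hs]; ring⟩

lemma eq_of_bary_eq (hup : T.up = T'.up) (hx : ∀ l, T.bary l x = T'.bary l x) : T = T' := by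
  have hs : T.sign = T'.sign := by simp only [sign, hup]
  have hbary (l : Fin 3) (y : Pt) : T'.bary l y = T.bary l y := by
    have hy := (T.sign_mul_bary_sub l y x).trans (T'.sign_mul_bary_sub l y x).symm
    rw [← hs, hx l] at hy
    linear_combination -T.sign * hy + (T.bary l y - T'.bary l y) * T.sign_mul_self
  refine eq_of_vertex_eq (l := 0) hup ?_
  calc T.vertex 0 = ∑ l, T'.bary l (T.vertex 0) • T'.vertex l :=
        (T'.sum_bary_smul_vertex _).symm
    _ = T'.vertex 0 := by
        simp [hbary, Fin.sum_univ_three, bary_vertex_self, bary_vertex_of_ne]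

lemma IsAligned.exists_int_eq_bary_sub (h : IsAligned T T') (hup : T.up = T'.up) (l : Fin 3)
    (x : Pt) : ∃ k : ℤ, T.bary l x - T'.bary l x = k := by
  obtain ⟨k, hk⟩ := h l x
  obtain ⟨s, hs⟩ := T.exists_int_eq_sign
  have hs' : T'.sign = T.sign := by simp only [sign, hup]
  refine ⟨s * k, ?_⟩
  push_cast
  rw [← hk, ← hs, hs']
  linear_combination -(T.bary l x - T'.bary l x) * T.sign_mul_self

lemma IsAligned.exists_int_eq_bary_add (h : IsAligned T T') (hup : T.up ≠ T'.up) (l : Fin 3)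
    (x : Pt) : ∃ k : ℤ, T.bary l x + T'.bary l x = k := by
  obtain ⟨k, hk⟩ := h l x
  obtain ⟨s, hs⟩ := T.exists_int_eq_sign
  have hs' : T'.sign = -T.sign := by
    rw [sign, sign, Bool.eq_not_of_ne hup.symm]
    cases T.up <;> simp
  refine ⟨s * k, ?_⟩
  push_cast
  rw [← hk, ← hs, hs']
  linear_combination -(T.bary l x + T'.bary l x) * T.sign_mul_self

/-- For equal orientations the coordinates at `x` differ by integers exceeding `-1` that sum to `0`.
For opposite ones each coordinate sum would be a positive integer, but they add up to only `2`. -/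
lemma IsAligned.eq_of_mem_region (h : IsAligned T T') (hx : ∀ l, 0 < T.bary l x)
    (hx' : x ∈ T'.region) : T = T' := by
  by_cases hup : T.up = T'.up
  · have hle (l : Fin 3) : T'.bary l x ≤ T.bary l x := by
      obtain ⟨k, hk⟩ := h.exists_int_eq_bary_sub hup l x
      have hlt : (-1 : ℝ) < k := by linarith [hx l, bary_le_one hx' l]
      have hk₀ : (0 : ℝ) ≤ k := mod_cast Int.lt_iff_add_one_le.1 (mod_cast hlt : -1 < k)
      linarith
    have hsum := (T'.sum_bary x).trans (T.sum_bary x).symm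
    rw [Finset.sum_eq_sum_iff_of_le fun l _ => hle l] at hsum
    exact eq_of_bary_eq hup fun l => (hsum l (Finset.mem_univ l)).symm
  · have hle (l : Fin 3) : 1 ≤ T.bary l x + T'.bary l x := by
      obtain ⟨k, hk⟩ := h.exists_int_eq_bary_add hup l x
      have hlt : (0 : ℝ) < k := by linarith [hx l, mem_region.1 hx' l]
      rw [hk]
      exact mod_cast Int.lt_iff_add_one_le.1 (mod_cast hlt : 0 < k)
    have hsum := Finset.card_nsmul_le_sum Finset.univ _ 1 fun l _ => hle l
    rw [Finset.sum_add_distrib, T.sum_bary, T'.sum_bary] at hsum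
    norm_num at hsum

/-! ### Affine functions on single triangles -/

lemma affineMap_apply_eq_sum (T : GridTriangle) (φ : Pt →ᵃ[ℝ] ℝ) (x : Pt) :
    φ x = ∑ l, T.bary l x * φ (T.vertex l) := by
  have hx := Finset.univ.map_affineCombination T.vertex (T.bary · x) (T.sum_bary x) φ
  rwa [Finset.univ.affineCombination_eq_linear_combination _ _ (T.sum_bary x),
    T.sum_bary_smul_vertex,
    Finset.univ.affineCombination_eq_linear_combination _ _ (T.sum_bary x)] at hx

lemma affineMap_sub_eq_bary_mul (hφ : ∀ m ≠ l, φ (T.vertex m) = φ' (T.vertex m)) (x : Pt) :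
    φ x - φ' x = T.bary l x * (φ (T.vertex l) - φ' (T.vertex l)) := by
  rw [T.affineMap_apply_eq_sum φ, T.affineMap_apply_eq_sum φ', ← Finset.sum_sub_distrib,
    Finset.sum_eq_single l (fun m _ hm => by rw [hφ m hm, sub_self]) (by simp), mul_sub]

lemma affineMap_eq_of_bary_eq_zero (hφ : ∀ m ≠ l, φ (T.vertex m) = φ' (T.vertex m))
    (hx : T.bary l x = 0) : φ x = φ' x := by
  rw [← sub_eq_zero, affineMap_sub_eq_bary_mul hφ, hx, zero_mul]

lemma affineMap_edge_snd_sub_fst (T : GridTriangle) (φ : Pt →ᵃ[ℝ] ℝ) (m : Fin 3) :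
    φ (T.edge m).2 - φ (T.edge m).1 = φ.linear (xiv m) := by
  rw [← T.edge_snd_sub_fst m, ← vsub_eq_sub (T.edge m).2, φ.linearMap_vsub, vsub_eq_sub]

lemma exists_affineMap_vertex_eq (T : GridTriangle) (u : Fin 3 → ℝ) :
    ∃ φ : Pt →ᵃ[ℝ] ℝ, ∀ l, φ (T.vertex l) = u l := by
  refine ⟨u 0 • T.bary 0 + u 1 • T.bary 1 + u 2 • T.bary 2, fun l => ?_⟩
  obtain rfl | rfl | rfl : l = 0 ∨ l = 1 ∨ l = 2 := by omega
  all_goals simp [bary_vertex_self, bary_vertex_of_ne]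

/-- An affine function inducing `h` on the three edges of a little triangle. -/
def IsPotential (T : GridTriangle) (h : Ed → ℝ) (φ : Pt →ᵃ[ℝ] ℝ) : Prop :=
  ∀ l, h (T.edge l) = φ (T.edge l).2 - φ (T.edge l).1

lemma isPotential_iff_vertex :
    T.IsPotential h φ ↔
      ∀ l, φ (T.vertex (l + 2)) - φ (T.vertex (l + 1)) = T.sign * h (T.edge l) := by
  refine forall_congr' fun l => ?_
  rcases hT : T.up <;> simp only [edge, sign, hT, Bool.false_eq_true, if_true, if_false] <;>
    constructor <;> intro h <;> linarith

lemma exists_isPotential_vertex_eq (hT : ∑ l, h (T.edge l) = 0) (k : Fin 3) (c : ℝ) :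
    ∃ φ, T.IsPotential h φ ∧ φ (T.vertex k) = c := by
  obtain ⟨φ, hφ⟩ := T.exists_affineMap_vertex_eq
    ![-(T.sign * h (T.edge 2)), 0, T.sign * h (T.edge 0)]
  refine ⟨φ + AffineMap.const ℝ Pt (c - φ (T.vertex k)), isPotential_iff_vertex.2 fun l => ?_,
    by simp⟩
  rw [Fin.sum_univ_three] at hT
  have hdiff : -(T.sign * h (T.edge 2)) - T.sign * h (T.edge 0) = T.sign * h (T.edge 1) := by
    linear_combination -T.sign * hT
  obtain rfl | rfl | rfl : l = 0 ∨ l = 1 ∨ l = 2 := by omega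
  · simp [hφ]
  · simpa [hφ] using hdiff
  · simp [hφ]

/-- Both functions induce `h` on the common edge, so it suffices that they agree at one end. -/
lemma IsPotential.eq_of_bary_eq_zero (hφ : T.IsPotential h φ) (hφ' : (T.flip l).IsPotential h φ')
    (hm : m ≠ l) (hv : φ' (T.vertex m) = φ (T.vertex m)) (hx : T.bary l x = 0) : φ' x = φ x := by
  have hdiff : φ' (T.vertex (l + 2)) - φ' (T.vertex (l + 1)) =
      φ (T.vertex (l + 2)) - φ (T.vertex (l + 1)) := by
    have hl := hφ l
    have hl' := hφ' l
    rw [edge_flip_self] at hl'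
    rcases hT : T.up <;> simp only [edge, hT, Bool.false_eq_true, if_true, if_false] at hl hl' <;>
      linarith
  have hagree : ∀ n ≠ l, φ' (T.vertex n) = φ (T.vertex n) := by
    intro n hn
    obtain rfl | rfl : m = l + 1 ∨ m = l + 2 := by omega
    all_goals
      obtain rfl | rfl : n = l + 1 ∨ n = l + 2 := by omega
      all_goals linarith
  exact affineMap_eq_of_bary_eq_zero hagree hx

/-! ### Families of affine functions -/

/-- A family of little triangles closed under crossing an edge that separates a triangle from the
point `x₀`. -/
def IsClosedToward (x₀ : Pt) (𝒯 : Finset GridTriangle) : Prop :=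
  ∀ T ∈ 𝒯, ∀ l, T.bary l x₀ < 0 → T.flip l ∈ 𝒯

/-- A family of affine functions, one for each little triangle in `𝒯`, such that neighbouring ones
agree on the line through the common edge. -/
def IsCompatible (𝒯 : Finset GridTriangle) (Φ : GridTriangle → Pt →ᵃ[ℝ] ℝ) : Prop :=
  ∀ T ∈ 𝒯, ∀ l, T.flip l ∈ 𝒯 → ∀ x, T.bary l x = 0 → Φ (T.flip l) x = Φ T x

lemma IsClosedToward.of_insert (h𝒯 : IsClosedToward x₀ (insert T 𝒯))
    (hmax : ∀ S ∈ 𝒯, S.baryNormSq x₀ ≤ T.baryNormSq x₀) : IsClosedToward x₀ 𝒯 := by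
  intro S hS l hl
  refine (Finset.mem_insert.1 (h𝒯 S (Finset.mem_insert_of_mem hS) l hl)).resolve_left ?_
  rintro rfl
  linarith [hmax S hS, S.baryNormSq_flip l x₀]

lemma IsCompatible.insert_update (hΦ : IsCompatible 𝒯 Φ) (hT : T ∉ 𝒯)
    (hφ : ∀ l, T.flip l ∈ 𝒯 → ∀ x, T.bary l x = 0 → Φ (T.flip l) x = φ x) :
    IsCompatible (insert T 𝒯) (Function.update Φ T φ) := by
  have hne {S : GridTriangle} (hS : S ∈ 𝒯) : S ≠ T := ne_of_mem_of_not_mem hS hT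
  intro S hS l hSl x hx
  rcases Finset.mem_insert.1 hS with rfl | hS
  · have hSl := (Finset.mem_insert.1 hSl).resolve_left (S.flip_ne l)
    rw [Function.update_of_ne (hne hSl), Function.update_self, hφ l hSl x hx]
  · rw [Function.update_of_ne (hne hS)]
    rcases Finset.mem_insert.1 hSl with rfl | hSl
    · have hSl : (S.flip l).flip l ∈ 𝒯 := by rwa [flip_flip]
      rw [Function.update_self, ← hφ l hSl x (by rw [bary_flip_self, hx, neg_zero]), flip_flip]
    · rw [Function.update_of_ne (hne hSl), hΦ S hS l hSl x hx]

/-- Half of the way round the hexagon centred at vertex `k`. -/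
lemma IsCompatible.apply_flip_flip_flip_vertex (hΦ : IsCompatible 𝒯 Φ) (h𝒯 : IsClosedToward x₀ 𝒯)
    (hki : k ≠ i) (hji : j ≠ i) (hjk : j ≠ k) (hi : T.flip i ∈ 𝒯) (hk : 1 < T.bary k x₀)
    (hj : T.bary j x₀ < 0) :
    Φ (((T.flip i).flip k).flip j) (T.vertex k) = Φ (T.flip i) (T.vertex k) := by
  have hk𝒯 : (T.flip i).flip k ∈ 𝒯 := by
    refine h𝒯 _ hi k ?_
    rw [bary_flip_of_ne T hki]
    linarith
  have hj𝒯 : ((T.flip i).flip k).flip j ∈ 𝒯 := by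
    refine h𝒯 _ hk𝒯 j ?_
    rw [bary_flip_of_ne _ hjk, bary_flip_of_ne T hji]
    linarith
  have hzero : (T.flip i).bary k (T.vertex k) = 0 := by
    rw [bary_flip_of_ne T hki, bary_vertex_self, sub_self]
  have hzero' : ((T.flip i).flip k).bary j (T.vertex k) = 0 := by
    rw [bary_flip_of_ne _ hjk, bary_flip_of_ne T hji, bary_vertex_of_ne T hjk, sub_zero, sub_self]
  rw [hΦ _ hk𝒯 j hj𝒯 _ hzero', hΦ _ hi k hk𝒯 _ hzero]

lemma IsCompatible.apply_flip_vertex_eq (hΦ : IsCompatible 𝒯 Φ) (h𝒯 : IsClosedToward x₀ 𝒯)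
    (hki : k ≠ i) (hkj : k ≠ j) (hi : T.flip i ∈ 𝒯) (hj : T.flip j ∈ 𝒯)
    (hi₀ : T.bary i x₀ < 0) (hj₀ : T.bary j x₀ < 0) :
    Φ (T.flip i) (T.vertex k) = Φ (T.flip j) (T.vertex k) := by
  obtain rfl | hij := eq_or_ne i j
  · rfl
  have hk : 1 < T.bary k x₀ := by
    have hsum := T.sum_bary x₀
    rw [sum_eq_add_add_of_ne hij hki.symm hkj.symm] at hsum
    linarith
  rw [← hΦ.apply_flip_flip_flip_vertex h𝒯 hki hij.symm hkj.symm hi hk hj₀,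
    ← hΦ.apply_flip_flip_flip_vertex h𝒯 hkj hij hki.symm hj hk hi₀,
    T.flip_flip_flip hij hki.symm hkj.symm]

/-- Triangles are added in the order of their distance from `x₀`; the neighbours of a new triangle
already present lie across edges separating it from `x₀`, and these edges have a common end. -/
lemma exists_isCompatible (hx₀ : ∀ T ∈ 𝒯, ∀ l, T.bary l x₀ ≠ 0) (h𝒯 : IsClosedToward x₀ 𝒯)
    (hsum : ∀ T ∈ 𝒯, ∑ l, h (T.edge l) = 0) :
    ∃ Φ, IsCompatible 𝒯 Φ ∧ ∀ T ∈ 𝒯, T.IsPotential h (Φ T) := by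
  induction 𝒯 using Finset.induction_on_max_value (baryNormSq · x₀) with
  | empty => exact ⟨fun _ => AffineMap.const ℝ Pt 0, by simp [IsCompatible]⟩
  | insert T 𝒯 hT hmax ih =>
    simp only [Finset.forall_mem_insert] at hx₀ hsum
    have h𝒯' := h𝒯.of_insert hmax
    obtain ⟨Φ, hΦ, hpot⟩ := ih hx₀.2 h𝒯' hsum.2
    have hneg {l : Fin 3} (hl : T.flip l ∈ 𝒯) : T.bary l x₀ < 0 := by
      refine lt_of_le_of_ne ?_ (hx₀.1 l)
      linarith [hmax _ hl, T.baryNormSq_flip l x₀]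
    obtain ⟨k, hk⟩ : ∃ k, 0 < T.bary k x₀ := by
      by_contra! hle
      linarith [T.sum_bary x₀, Finset.sum_nonpos fun l (_ : l ∈ Finset.univ) => hle l]
    have hne {l : Fin 3} (hl : T.flip l ∈ 𝒯) : k ≠ l := by
      rintro rfl
      exact (hneg hl).not_gt hk
    obtain ⟨c, hc⟩ : ∃ c, ∀ l, T.flip l ∈ 𝒯 → Φ (T.flip l) (T.vertex k) = c := by
      by_cases! hex : ∃ j, T.flip j ∈ 𝒯
      · obtain ⟨j, hj⟩ := hex
        exact ⟨Φ (T.flip j) (T.vertex k), fun i hi =>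
          hΦ.apply_flip_vertex_eq h𝒯' (hne hi) (hne hj) hi hj (hneg hi) (hneg hj)⟩
      · exact ⟨0, fun l hl => absurd hl (hex l)⟩
    obtain ⟨φ, hφ, hφk⟩ := exists_isPotential_vertex_eq hsum.1 k c
    refine ⟨Function.update Φ T φ, hΦ.insert_update hT fun l hl x hx => ?_, ?_⟩
    · exact hφ.eq_of_bary_eq_zero (hpot _ hl) (hne hl) ((hc l hl).trans hφk.symm) hx
    · simp only [Finset.forall_mem_insert, Function.update_self]
      refine ⟨hφ, fun S hS => ?_⟩
      rw [Function.update_of_ne (ne_of_mem_of_not_mem hS hT)]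
      exact hpot S hS

/-- A family of affine functions, one for each little triangle in `𝒯`, such that across every
common edge the function of one triangle, extended to the other, lies above the function there. -/
def IsLocallyConcave (𝒯 : Finset GridTriangle) (Φ : GridTriangle → Pt →ᵃ[ℝ] ℝ) : Prop :=
  ∀ T ∈ 𝒯, ∀ l, T.flip l ∈ 𝒯 → Φ T (T.vertex l) ≤ Φ (T.flip l) (T.vertex l)

lemma IsCompatible.apply_flip_sub_apply (hΦ : IsCompatible 𝒯 Φ) (hT : T ∈ 𝒯) (hl : T.flip l ∈ 𝒯)
    (x : Pt) :
    Φ (T.flip l) x - Φ T x = T.bary l x * (Φ (T.flip l) (T.vertex l) - Φ T (T.vertex l)) :=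
  affineMap_sub_eq_bary_mul
    (fun _ hm => hΦ T hT l hl _ (bary_vertex_of_ne T hm.symm)) x

lemma IsLocallyConcave.apply_flip_le (hconc : IsLocallyConcave 𝒯 Φ) (hΦ : IsCompatible 𝒯 Φ)
    (hT : T ∈ 𝒯) (hl : T.flip l ∈ 𝒯) (hx : T.bary l x ≤ 0) : Φ (T.flip l) x ≤ Φ T x := by
  rw [← sub_nonpos, hΦ.apply_flip_sub_apply hT hl]
  exact mul_nonpos_of_nonpos_of_nonneg hx (sub_nonneg.2 (hconc T hT l hl))

/-- Crossing an edge that separates the current triangle from `x` moves the triangle closer to `x`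
and does not increase the value at `x`. -/
lemma IsLocallyConcave.exists_mem_region_apply_le (hconc : IsLocallyConcave 𝒯 Φ)
    (hΦ : IsCompatible 𝒯 Φ) (h𝒯 : IsClosedToward x 𝒯) (hS : S ∈ 𝒯) :
    ∃ T ∈ 𝒯, x ∈ T.region ∧ Φ T x ≤ Φ S x := by
  obtain ⟨T, hT, hmin⟩ := (𝒯.filter (Φ · x ≤ Φ S x)).exists_min_image (baryNormSq · x)
    ⟨S, Finset.mem_filter.2 ⟨hS, le_rfl⟩⟩
  obtain ⟨hT, hTS⟩ := Finset.mem_filter.1 hT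
  refine ⟨T, hT, mem_region.2 fun l => ?_, hTS⟩
  by_contra! hl
  have hflip := h𝒯 T hT l hl
  have hle := (hconc.apply_flip_le hΦ hT hflip hl.le).trans hTS
  linarith [hmin _ (Finset.mem_filter.2 ⟨hflip, hle⟩), T.baryNormSq_flip l x]

end GridTriangle

/-! ### Convex grids -/

namespace ConvexGrid

open GridTriangle

variable {G : ConvexGrid} {S T : GridTriangle} {l m : Fin 3} {x : Pt} {h : Ed → ℝ} {g : Pt → ℝ}
  {Φ : GridTriangle → Pt →ᵃ[ℝ] ℝ}

lemma mem_region : x ∈ G.region ↔ ∃ T ∈ G.tris, x ∈ T.region := by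
  simp only [region, Set.mem_iUnion, exists_prop]

lemma convex_region (G : ConvexGrid) : Convex ℝ G.region :=
  G.convex

/-- Points slightly beyond the common edge on the way to `x` lie in the region and in the interior
of `T.flip l`, hence in no other triangle of the grid. -/
lemma flip_mem_tris (hT : T ∈ G.tris) (hx : x ∈ G.region) (hl : T.bary l x < 0) :
    T.flip l ∈ G.tris := by
  have hpos (m : Fin 3) : ∀ᶠ t in 𝓝[>] (0 : ℝ),
      0 < (T.flip l).bary m (AffineMap.lineMap (T.rhombusCenter l) x t) := by
    simp only [AffineMap.apply_lineMap]
    obtain rfl | hm := eq_or_ne m l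
    · apply eventually_lineMap_pos <;>
        simp [bary_flip_self, bary_rhombusCenter_self, hl]
    · apply eventually_lineMap_pos <;>
        norm_num [bary_flip_of_ne T hm, bary_rhombusCenter_of_ne T hm]
  obtain ⟨t, ht, ht₀₁⟩ := ((eventually_all.2 hpos).and (Ioo_mem_nhdsGT one_pos)).exists
  have hc : T.rhombusCenter l ∈ G.region := mem_region.2 ⟨T, hT, T.rhombusCenter_mem_region l⟩
  obtain ⟨T', hT', hy⟩ := mem_region.1 <|
    G.convex_region.lineMap_mem hc hx (Set.Ioo_subset_Icc_self ht₀₁)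
  have hal := (isAligned_of_isLatticeVec (G.aligned T hT T' hT')).flip_left l
  rwa [hal.eq_of_mem_region ht hy]

lemma isClosedToward_tris (hx : x ∈ G.region) : IsClosedToward x G.tris :=
  fun _ hT _ hl => flip_mem_tris hT hx hl

/-- All coordinates of the centroid of a triangle of the grid are integers plus or minus `1 / 3`. -/
lemma exists_mem_region_forall_bary_ne_zero (G : ConvexGrid) :
    ∃ x ∈ G.region, ∀ T ∈ G.tris, ∀ l, T.bary l x ≠ 0 := by
  obtain ⟨T₀, hT₀⟩ := G.nonempty
  refine ⟨T₀.centroid, mem_region.2 ⟨T₀, hT₀, T₀.centroid_mem_region⟩, fun T hT l hl => ?_⟩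
  obtain ⟨k, hk⟩ := isAligned_of_isLatticeVec (G.aligned T₀ hT₀ T hT) l T₀.centroid
  rw [hl, bary_centroid, mul_zero, sub_zero] at hk
  have hk' : 9 * (k * k) = 1 := by
    rify
    rw [← hk]
    linear_combination T₀.sign_mul_self
  omega

lemma exists_isCompatible_isPotential (hc : IsCocirculation G h) :
    ∃ Φ, IsCompatible G.tris Φ ∧ ∀ T ∈ G.tris, T.IsPotential h (Φ T) := by
  obtain ⟨x, hx, hx₀⟩ := G.exists_mem_region_forall_bary_ne_zero
  exact exists_isCompatible hx₀ (isClosedToward_tris hx)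
    fun T hT => (sum_edge h T).trans (hc T hT)

lemma apply_le_apply_of_bary_pos (hconc : IsLocallyConcave G.tris Φ) (hΦ : IsCompatible G.tris Φ)
    (hT : T ∈ G.tris) (hS : S ∈ G.tris) (hx : ∀ l, 0 < T.bary l x) : Φ T x ≤ Φ S x := by
  have hxG : x ∈ G.region := mem_region.2 ⟨T, hT, GridTriangle.mem_region.2 fun l => (hx l).le⟩
  obtain ⟨T', hT', hxT', hle⟩ :=
    hconc.exists_mem_region_apply_le hΦ (isClosedToward_tris hxG) hS
  obtain rfl := (isAligned_of_isLatticeVec (G.aligned T hT T' hT')).eq_of_mem_region hx hxT'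
  exact hle

lemma apply_le_apply_of_mem_region (hconc : IsLocallyConcave G.tris Φ)
    (hΦ : IsCompatible G.tris Φ) (hT : T ∈ G.tris) (hS : S ∈ G.tris) (hx : x ∈ T.region) :
    Φ T x ≤ Φ S x := by
  by_contra! hlt
  have hpos (l : Fin 3) : ∀ᶠ t in 𝓝[>] (0 : ℝ),
      0 < T.bary l (AffineMap.lineMap x T.centroid t) := by
    simp only [AffineMap.apply_lineMap, bary_centroid]
    exact eventually_lineMap_pos (GridTriangle.mem_region.1 hx l) fun _ => by norm_num
  have hgt : ∀ᶠ t in 𝓝[>] (0 : ℝ), 0 < (Φ T - Φ S) (AffineMap.lineMap x T.centroid t) := by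
    simp only [AffineMap.apply_lineMap]
    apply eventually_lineMap_pos <;> simp [hlt.le, sub_eq_zero, hlt.ne']
  obtain ⟨t, ht, htS⟩ := ((eventually_all.2 hpos).and hgt).exists
  simp only [AffineMap.coe_sub, Pi.sub_apply, sub_pos] at htS
  exact (apply_le_apply_of_bary_pos hconc hΦ hT hS ht).not_gt htS

lemma exists_concaveOn_eq_on_region (hconc : IsLocallyConcave G.tris Φ)
    (hΦ : IsCompatible G.tris Φ) :
    ∃ g : Pt → ℝ, ConcaveOn ℝ G.region g ∧ ∀ T ∈ G.tris, ∀ x ∈ T.region, g x = Φ T x := by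
  refine ⟨G.tris.inf' G.nonempty fun T => ⇑(Φ T), ?_, fun T hT x hx => ?_⟩
  · refine Finset.inf'_induction G.nonempty _ (fun _ h₁ _ h₂ => h₁.inf h₂) fun T _ => ?_
    exact ((concaveOn_id convex_univ).comp_affineMap (Φ T)).subset (Set.subset_univ _)
      G.convex_region
  · rw [Finset.inf'_apply]
    exact le_antisymm (Finset.inf'_le _ hT) <| Finset.le_inf' _ _ fun S hS =>
      apply_le_apply_of_mem_region hconc hΦ hT hS hx

lemma edge_sub_edge_flip (hΦ : IsCompatible G.tris Φ)
    (hpot : ∀ T ∈ G.tris, T.IsPotential h (Φ T)) (hT : T ∈ G.tris) (hTl : T.flip l ∈ G.tris)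
    (hm : m ≠ l) (hml : T.bary l (T.edge m).2 = 0) :
    h (T.edge m) - h ((T.flip l).edge m) = Φ (T.flip l) (T.vertex l) - Φ T (T.vertex l) := by
  have hflip : h ((T.flip l).edge m) = Φ (T.flip l) (T.edge m).2 - Φ (T.flip l) (T.edge m).1 := by
    rw [hpot _ hTl m, affineMap_edge_snd_sub_fst, affineMap_edge_snd_sub_fst]
  have hml' : T.bary l (T.edge m).1 = 1 := by linarith [T.bary_edge_fst_add_snd hm]
  have h₁ := hΦ.apply_flip_sub_apply hT hTl (T.edge m).1
  have h₂ := hΦ.apply_flip_sub_apply hT hTl (T.edge m).2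
  rw [hml'] at h₁
  rw [hml] at h₂
  rw [hpot T hT m, hflip]
  linarith

lemma rhombusCondition_iff_isLocallyConcave (hΦ : IsCompatible G.tris Φ)
    (hpot : ∀ T ∈ G.tris, T.IsPotential h (Φ T)) :
    RhombusCondition G h ↔ IsLocallyConcave G.tris Φ := by
  constructor
  · intro hrh T hT l hTl
    obtain ⟨m, hm, hml⟩ := T.exists_edge_snd_eq_edge_fst l
    have hshared : T.edge l ∈ T.edgeFinset ∩ (T.flip l).edgeFinset :=
      Finset.mem_inter.2 ⟨T.edge_mem_edgeFinset l,
        T.edge_flip_self l ▸ (T.flip l).edge_mem_edgeFinset l⟩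
    have hle := hrh T hT _ hTl (T.flip_ne l).symm _ hshared _ (T.edge_mem_edgeFinset m) _
      ((T.flip l).edge_mem_edgeFinset m) (T.edge_flip_ne hm)
      (by rw [edge_snd_sub_fst, edge_snd_sub_fst]) (Or.inl hml)
    have hbary : T.bary l (T.edge m).2 = 0 := hml ▸ (T.bary_edge_self l).1
    linarith [edge_sub_edge_flip hΦ hpot hT hTl hm hbary]
  · intro hconc T hT T' hT' hne e₀ he₀ e he e' he' hee' hpar hobt
    obtain ⟨he₀, he₀'⟩ := Finset.mem_inter.1 he₀
    obtain ⟨l, rfl, rfl⟩ := exists_eq_flip_of_mem_edgeFinset hne he₀ he₀'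
    obtain ⟨m, rfl⟩ := mem_edgeFinset.1 he
    obtain ⟨m', rfl⟩ := mem_edgeFinset.1 he'
    rw [edge_snd_sub_fst, edge_snd_sub_fst] at hpar
    obtain rfl := xiv_injective hpar
    have hm : m ≠ l := by
      rintro rfl
      exact hee' (T.edge_flip_self m).symm
    have hbary : T.bary l (T.edge m).2 = 0 := by
      rcases hobt with h | h <;> rw [h]
      exacts [(T.bary_edge_self l).1, (T.bary_edge_self l).2]
    linarith [edge_sub_edge_flip hΦ hpot hT hT' hm hbary, hconc T hT l hT']

lemma isCompatible_of_eq_on_region (hgΦ : ∀ T ∈ G.tris, ∀ x ∈ T.region, g x = Φ T x) :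
    IsCompatible G.tris Φ := by
  intro T hT l hTl x hx
  refine affineMap_eq_of_bary_eq_zero (fun m hm => ?_) hx
  rw [← hgΦ _ hTl _ (T.vertex_mem_region_flip hm), ← hgΦ T hT _ (T.vertex_mem_region m)]

lemma isLocallyConcave_of_concaveOn (hg : ConcaveOn ℝ G.region g)
    (hgΦ : ∀ T ∈ G.tris, ∀ x ∈ T.region, g x = Φ T x) : IsLocallyConcave G.tris Φ := by
  intro T hT l hTl
  have hv := T.vertex_mem_region l
  have hw := (T.flip l).vertex_mem_region l
  have hmid : T.rhombusCenter l =
      (1 / 2 : ℝ) • T.vertex l + (1 / 2 : ℝ) • (T.flip l).vertex l := by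
    rw [rhombusCenter, midpoint_eq_smul_add, invOf_eq_inv, smul_add, one_div]
  have hgM := hg.2 (mem_region.2 ⟨T, hT, hv⟩) (mem_region.2 ⟨_, hTl, hw⟩)
    one_half_pos.le one_half_pos.le (add_halves 1)
  rw [← hmid, hgΦ T hT _ (T.rhombusCenter_mem_region l), hgΦ T hT _ hv, hgΦ _ hTl _ hw,
    rhombusCenter, AffineMap.map_midpoint, midpoint_eq_smul_add, invOf_eq_inv] at hgM
  have hsub := (isCompatible_of_eq_on_region hgΦ).apply_flip_sub_apply hT hTl ((T.flip l).vertex l)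
  rw [bary_vertex_flip_self] at hsub
  simp only [smul_eq_mul] at hgM
  linarith

lemma forall_isPotential_iff (hgΦ : ∀ T ∈ G.tris, ∀ x ∈ T.region, g x = Φ T x) :
    (∀ T ∈ G.tris, T.IsPotential h (Φ T)) ↔ ∀ e ∈ G.edges, h e = g e.2 - g e.1 := by
  have hdiff {T : GridTriangle} (hT : T ∈ G.tris) (l : Fin 3) :
      Φ T (T.edge l).2 - Φ T (T.edge l).1 = g (T.edge l).2 - g (T.edge l).1 := by
    rw [hgΦ T hT _ (T.edge_mem_region l).1, hgΦ T hT _ (T.edge_mem_region l).2]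
  constructor
  · intro hpot e he
    obtain ⟨T, hT, he⟩ := Finset.mem_biUnion.1 he
    obtain ⟨l, rfl⟩ := mem_edgeFinset.1 he
    rw [hpot T hT l, hdiff hT]
  · intro hgh T hT l
    rw [hgh _ (Finset.mem_biUnion.2 ⟨T, hT, T.edge_mem_edgeFinset l⟩), hdiff hT]

end ConvexGrid

/-- A cocirculation is concave iff every little rhombus satisfies the
rhombus condition. -/
theorem stmt4 (G : ConvexGrid) (h : Ed → ℝ) (hc : IsCocirculation G h) :
    IsConcaveCocirculation G h ↔ RhombusCondition G h := by
  constructor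
  · rintro ⟨-, g, hg, haff, hgh⟩
    choose! Φ hgΦ using haff
    have hΦ := ConvexGrid.isCompatible_of_eq_on_region hgΦ
    have hpot := (ConvexGrid.forall_isPotential_iff hgΦ).2 hgh
    exact (ConvexGrid.rhombusCondition_iff_isLocallyConcave hΦ hpot).2
      (ConvexGrid.isLocallyConcave_of_concaveOn hg hgΦ)
  · intro hrh
    obtain ⟨Φ, hΦ, hpot⟩ := ConvexGrid.exists_isCompatible_isPotential hc
    have hconc := (ConvexGrid.rhombusCondition_iff_isLocallyConcave hΦ hpot).1 hrh
    obtain ⟨g, hg, hgΦ⟩ := ConvexGrid.exists_concaveOn_eq_on_region hconc hΦ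
    exact ⟨hc, g, hg, fun T hT => ⟨Φ T, hgΦ T hT⟩, (ConvexGrid.forall_isPotential_iff hgΦ).1 hpot⟩

end
end
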